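/- arXiv:2310.12687 — 3 statements merged into one kernel-verified Lean document; each statement's English description precedes it below -/
import Mathlib

section
/- For every n ≥ 1, the number of Tamari interval-posets of size n equals 2·(4n+1)!/((n+1)!·(3n+2)!). Equivalently, if N(n) denotes the number of partial orders on {1,…,n} that are Tamari interval-posets, then (n+1)! · (3n+2)! · N(n) = 2 · (4n+1)!. -/
/-- A Tamari interval-poset of size `n`: a partial order `r` on `{1,…,n}`
(modeled on `Fin n`) such that for all `a < b < c`, `a ≺ c` implies `b ≺ c`,
and `c ≺ a` implies `b ≺ a`. -/
def IsTamariIntervalPoset (n : ℕ) (r : Fin n → Fin n → Prop) : Prop :=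
  IsPartialOrder (Fin n) r ∧
    (∀ a b c : Fin n, a < b → b < c → r a c → r b c) ∧
    (∀ a b c : Fin n, a < b → b < c → r c a → r b a)

/-- Tamari interval-posets of size `n`, modeled as relations on `ℕ` supported on `{0, …, n - 1}`. -/
structure IsNatIntervalPoset (n : ℕ) (r : ℕ → ℕ → Prop) : Prop where
  dom : ∀ i j, r i j → i < n ∧ j < n
  refl : ∀ i, i < n → r i i
  antisymm : ∀ i j, r i j → r j i → i = j
  trans : ∀ i j k, r i j → r j k → r i k
  incr : ∀ a b c, a < b → b < c → r a c → r b c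
  decr : ∀ a b c, a < b → b < c → r c a → r b a

/-- Extending relations on `Fin n` by `False` identifies Tamari interval-posets with
relations on `ℕ`. -/
def intervalPosetEquiv (n : ℕ) :
    {r : Fin n → Fin n → Prop // IsTamariIntervalPoset n r} ≃
      {r : ℕ → ℕ → Prop // IsNatIntervalPoset n r} where
  toFun r := ⟨fun i j => ∃ (hi : i < n) (hj : j < n), r.1 ⟨i, hi⟩ ⟨j, hj⟩, by
    obtain ⟨r, hr, h1, h2⟩ := r
    constructor
    · rintro i j ⟨hi, hj, -⟩
      exact ⟨hi, hj⟩
    · exact fun i hi => ⟨hi, hi, hr.refl _⟩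
    · rintro i j ⟨hi, hj, h⟩ ⟨_, _, h'⟩
      exact congrArg Fin.val (hr.antisymm _ _ h h')
    · rintro i j k ⟨hi, hj, h⟩ ⟨_, hk, h'⟩
      exact ⟨hi, hk, hr.trans _ _ _ h h'⟩
    · rintro a b c hab hbc ⟨ha, hc, h⟩
      exact ⟨hbc.trans hc, hc, h1 ⟨a, ha⟩ ⟨b, _⟩ ⟨c, hc⟩ hab hbc h⟩
    · rintro a b c hab hbc ⟨hc, ha, h⟩
      exact ⟨hbc.trans hc, ha, h2 ⟨a, ha⟩ ⟨b, _⟩ ⟨c, hc⟩ hab hbc h⟩⟩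
  invFun r := ⟨fun i j => r.1 i j, by
    obtain ⟨r, hr⟩ := r
    refine ⟨{ refl := fun i => hr.refl _ i.2, trans := fun i j k => hr.trans i j k,
              antisymm := fun i j h h' => Fin.ext (hr.antisymm _ _ h h') },
      fun a b c hab hbc h => hr.incr _ _ _ hab hbc h,
      fun a b c hab hbc h => hr.decr _ _ _ hab hbc h⟩⟩
  left_inv r := by
    ext i j
    simp
  right_inv r := by
    ext i j
    simp only [exists_prop]
    exact ⟨fun h => h.2.2, fun h => ⟨(r.2.dom _ _ h).1, (r.2.dom _ _ h).2, h⟩⟩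

theorem finite_setOf_isNatIntervalPoset (n : ℕ) : {r | IsNatIntervalPoset n r}.Finite :=
  Finite.of_equiv _ (intervalPosetEquiv n)

/-- The finset of interval-posets of size `n`. -/
noncomputable def intervalPosets (n : ℕ) : Finset (ℕ → ℕ → Prop) :=
  (finite_setOf_isNatIntervalPoset n).toFinset

theorem mem_intervalPosets {n : ℕ} {r : ℕ → ℕ → Prop} :
    r ∈ intervalPosets n ↔ IsNatIntervalPoset n r := by
  simp [intervalPosets]

theorem card_intervalPosets (n : ℕ) : (intervalPosets n).card =
    Nat.card {r : Fin n → Fin n → Prop // IsTamariIntervalPoset n r} := by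
  rw [Nat.card_congr (intervalPosetEquiv n)]
  exact (Nat.card_eq_card_finite_toFinset (finite_setOf_isNatIntervalPoset n)).symm

open Classical in
/-- The `s < n` such that `{0, …, s - 1}` is a down-set; these are the roots of the forest of
decreasing relations of an interval-poset of size `n`. -/
noncomputable def forestRoots (n : ℕ) (r : ℕ → ℕ → Prop) : Finset ℕ :=
  (Finset.range n).filter fun s => ∀ i j, r i j → j < s → i < s

theorem mem_forestRoots {n s : ℕ} {r : ℕ → ℕ → Prop} :
    s ∈ forestRoots n r ↔ s < n ∧ ∀ i j, r i j → j < s → i < s := by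
  simp [forestRoots]

/-- Put `r₁`, a new vertex `k`, and `r₂` next to each other, where the new vertex is above all of
`r₁` and above the first `s` vertices of `r₂`. -/
def glue (k s : ℕ) (r₁ r₂ : ℕ → ℕ → Prop) (i j : ℕ) : Prop :=
  r₁ i j ∨ (j = k ∧ i ≤ k + s) ∨ (k < i ∧ k < j ∧ r₂ (i - (k + 1)) (j - (k + 1)))

section glue

variable {k m s : ℕ} {r₁ r₂ : ℕ → ℕ → Prop}

theorem le_of_mem_insert_forestRoots (hs : s ∈ insert m (forestRoots m r₂)) : s ≤ m := by
  rcases Finset.mem_insert.1 hs with rfl | h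
  · exact le_rfl
  · exact (mem_forestRoots.1 h).1.le

theorem lt_of_mem_insert_forestRoots (h₂ : IsNatIntervalPoset m r₂)
    (hs : s ∈ insert m (forestRoots m r₂)) {i j : ℕ} (h : r₂ i j) (hj : j < s) : i < s := by
  rcases Finset.mem_insert.1 hs with rfl | h'
  · exact (h₂.dom _ _ h).1
  · exact (mem_forestRoots.1 h').2 _ _ h hj

theorem IsNatIntervalPoset.glue (h₁ : IsNatIntervalPoset k r₁) (h₂ : IsNatIntervalPoset m r₂)
    (hs : s ∈ insert m (forestRoots m r₂)) :
    IsNatIntervalPoset (k + m + 1) (glue k s r₁ r₂) := by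
  have hsm := le_of_mem_insert_forestRoots hs
  have hd := fun i j => lt_of_mem_insert_forestRoots h₂ hs (i := i) (j := j)
  obtain ⟨d1, f1, a1, t1, u1, v1⟩ := h₁
  obtain ⟨d2, f2, a2, t2, u2, v2⟩ := h₂
  constructor
  · rintro i j (h | h | ⟨hi, hj, h⟩)
    · have := d1 _ _ h; omega
    · omega
    · have := d2 _ _ h; omega
  · intro i hi
    rcases lt_trichotomy i k with h | h | h
    · exact .inl (f1 i h)
    · exact .inr (.inl (by omega))
    · exact .inr (.inr ⟨h, h, f2 _ (by omega)⟩)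
  · rintro i j (h | h | ⟨hi, hj, h⟩) (h' | h' | ⟨hi', hj', h'⟩)
    · exact a1 _ _ h h'
    · have := d1 _ _ h; omega
    · have := d1 _ _ h; omega
    · have := d1 _ _ h'; omega
    · omega
    · omega
    · have := d1 _ _ h'; omega
    · omega
    · have := a2 _ _ h h'; omega
  · rintro i j l (h | h | ⟨hi, hj, h⟩) (h' | h' | ⟨hi', hj', h'⟩)
    · exact .inl (t1 _ _ _ h h')
    · have := d1 _ _ h; exact .inr (.inl (by omega))
    · have := d1 _ _ h; omega
    · have := d1 _ _ h'; omega
    · exact .inr (.inl (by omega))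
    · omega
    · have := d1 _ _ h'; omega
    · have := hd _ _ h (by omega); exact .inr (.inl (by omega))
    · exact .inr (.inr ⟨hi, hj', t2 _ _ _ h h'⟩)
  · rintro a b c hab hbc (h | h | ⟨hi, hj, h⟩)
    · exact .inl (u1 _ _ _ hab hbc h)
    · exact .inr (.inl (by omega))
    · exact .inr (.inr ⟨by omega, hj, u2 _ _ _ (by omega) (by omega) h⟩)
  · rintro a b c hab hbc (h | h | ⟨hi, hj, h⟩)
    · exact .inl (v1 _ _ _ hab hbc h)
    · exact .inr (.inl (by omega))
    · exact .inr (.inr ⟨by omega, hj, v2 _ _ _ (by omega) (by omega) h⟩)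

theorem card_forestRoots_glue (h₁ : IsNatIntervalPoset k r₁) (h₂ : IsNatIntervalPoset m r₂)
    (hs : s ∈ insert m (forestRoots m r₂)) :
    (forestRoots (k + m + 1) (glue k s r₁ r₂)).card =
      (forestRoots k r₁).card + 1 + ((forestRoots m r₂).filter (s ≤ ·)).card := by
  have hsm := le_of_mem_insert_forestRoots hs
  have hd := fun i j => lt_of_mem_insert_forestRoots h₂ hs (i := i) (j := j)
  have hk : k ∉ forestRoots k r₁ := fun h => (mem_forestRoots.1 h).1.false
  have heq : forestRoots (k + m + 1) (_root_.glue k s r₁ r₂) = insert k (forestRoots k r₁) ∪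
      ((forestRoots m r₂).filter (s ≤ ·)).map (addRightEmbedding (k + 1)) := by
    ext v
    simp only [Finset.mem_union, Finset.mem_insert, Finset.mem_map, Finset.mem_filter,
      mem_forestRoots, addRightEmbedding_apply]
    constructor
    · rintro ⟨hv, h⟩
      rcases lt_trichotomy v k with hlt | rfl | hlt
      · exact .inl (.inr ⟨hlt, fun i j hij => h i j (.inl hij)⟩)
      · exact .inl (.inl rfl)
      · refine .inr ⟨v - (k + 1), ⟨⟨by omega, fun i j hij hj => ?_⟩, ?_⟩, by omega⟩
        · have := h (i + (k + 1)) (j + (k + 1))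
            (.inr (.inr ⟨by omega, by omega, by simpa using hij⟩)) (by omega)
          omega
        · have := h (k + s) k (.inr (.inl ⟨rfl, le_rfl⟩)) hlt
          omega
    · rintro ((rfl | ⟨hv, h⟩) | ⟨w, ⟨⟨hw, h⟩, hsw⟩, rfl⟩)
      · refine ⟨by omega, ?_⟩
        rintro i j (hij | hij | hij) hj
        · exact (h₁.dom _ _ hij).1
        · omega
        · omega
      · refine ⟨by omega, ?_⟩
        rintro i j (hij | hij | hij) hj
        · exact h _ _ hij hj
        · omega
        · omega
      · refine ⟨by omega, ?_⟩
        rintro i j (hij | hij | ⟨hi, hj', hij⟩) hj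
        · have := h₁.dom _ _ hij; omega
        · omega
        · have := h _ _ hij (by omega); omega
  rw [heq, Finset.card_union_of_disjoint, Finset.card_insert_of_notMem hk, Finset.card_map]
  rw [Finset.disjoint_left]
  intro v hv hv'
  simp only [Finset.mem_insert, mem_forestRoots, Finset.mem_map, addRightEmbedding_apply] at hv hv'
  obtain ⟨w, -, rfl⟩ := hv'
  omega

theorem glue_injective {k' s' : ℕ} {r₁' r₂' : ℕ → ℕ → Prop}
    (h₁ : IsNatIntervalPoset k r₁) (h₁' : IsNatIntervalPoset k' r₁')
    (h : glue k s r₁ r₂ = glue k' s' r₁' r₂') : k = k' ∧ s = s' ∧ r₁ = r₁' ∧ r₂ = r₂' := by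
  have hiff : ∀ i j, glue k s r₁ r₂ i j ↔ glue k' s' r₁' r₂' i j := fun i j => by rw [h]
  have d1 := h₁.dom
  have d1' := h₁'.dom
  have hkk : k = k' := by
    rcases lt_trichotomy k k' with hlt | heq | hlt
    · rcases (hiff k k').2 (.inr (.inl ⟨rfl, by omega⟩)) with h | h | h
      · have := d1 _ _ h; omega
      · omega
      · omega
    · exact heq
    · rcases (hiff k' k).1 (.inr (.inl ⟨rfl, by omega⟩)) with h | h | h
      · have := d1' _ _ h; omega
      · omega
      · omega
  subst hkk
  have hle : ∀ i, i ≤ k + s ↔ i ≤ k + s' := by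
    intro i
    have := hiff i k
    have e1 : ¬ r₁ i k := fun h => (d1 _ _ h).2.false
    have e2 : ¬ r₁' i k := fun h => (d1' _ _ h).2.false
    simpa [glue, e1, e2] using this
  refine ⟨rfl, ?_, ?_, ?_⟩
  · have := (hle (k + s)).1 le_rfl
    have := (hle (k + s')).2 le_rfl
    omega
  · ext i j
    constructor
    · intro h
      have := d1 _ _ h
      rcases (hiff i j).1 (.inl h) with h | h | h
      · exact h
      · omega
      · omega
    · intro h
      have := d1' _ _ h
      rcases (hiff i j).2 (.inl h) with h | h | h
      · exact h
      · omega
      · omega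
  · ext i j
    have := hiff (i + (k + 1)) (j + (k + 1))
    have e1 : ¬ r₁ (i + (k + 1)) (j + (k + 1)) := fun h => by have := d1 _ _ h; omega
    have e2 : ¬ r₁' (i + (k + 1)) (j + (k + 1)) := fun h => by have := d1' _ _ h; omega
    have e3 : j + (k + 1) ≠ k := by omega
    have e4 : ∀ l, k < l + (k + 1) := fun l => by omega
    simpa [glue, e1, e2, e3, e4] using this

end glue

theorem IsNatIntervalPoset.exists_glue {n : ℕ} {r : ℕ → ℕ → Prop}
    (hr : IsNatIntervalPoset (n + 1) r) :
    ∃ k m s r₁ r₂, k + m = n ∧ IsNatIntervalPoset k r₁ ∧ IsNatIntervalPoset m r₂ ∧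
      s ∈ insert m (forestRoots m r₂) ∧ _root_.glue k s r₁ r₂ = r := by
  classical
  obtain ⟨d, f, a, t, u, v⟩ := hr
  obtain ⟨k, hkn, hk, hmax⟩ : ∃ k ≤ n, (∀ i < k, r i k) ∧ ∀ j, k < j → ¬ r k j := by
    let P : ℕ → Prop := fun k => ∀ i < k, r i k
    have hP0 : P 0 := fun i hi => absurd hi (Nat.not_lt_zero i)
    refine ⟨Nat.findGreatest P n, Nat.findGreatest_le n,
      Nat.findGreatest_spec (P := P) (Nat.zero_le n) hP0, fun j hj hr => ?_⟩
    have hlt := d _ _ hr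
    refine Nat.findGreatest_is_greatest hj (by omega) fun i hi => ?_
    rcases lt_trichotomy i (Nat.findGreatest P n) with h | h | h
    · exact t _ _ _ (Nat.findGreatest_spec (P := P) (Nat.zero_le n) hP0 i h) hr
    · exact h ▸ hr
    · exact u _ _ _ h hi hr
  have hmax' : ∀ j, r k j → j = k := fun j hj => by
    rcases lt_trichotomy j k with h | h | h
    · exact (a _ _ (hk j h) hj)
    · exact h
    · exact absurd hj (hmax j h)
  have hlow : ∀ i j, i < k → r i j → j ≤ k := fun i j hi hij => by
    by_contra hj
    have := hmax' j (u _ _ _ hi (by omega) hij)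
    omega
  have hhigh : ∀ i j, j < k → r i j → i < k := fun i j hj hij => by
    by_contra hi
    rcases (not_lt.1 hi).eq_or_lt with rfl | hi
    · have := hmax' j hij; omega
    · have := hmax' j (v _ _ _ hj hi hij); omega
  obtain ⟨m, rfl⟩ := Nat.exists_eq_add_of_le hkn
  let s := Nat.findGreatest (fun s => r (k + s) k) m
  have hs0 : r (k + s) k :=
    Nat.findGreatest_spec (P := fun s => r (k + s) k) (Nat.zero_le m) (f k (by omega))
  have hs : ∀ i, r i k ↔ i ≤ k + s := by
    intro i
    constructor
    · intro hi
      by_contra hlt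
      have := d _ _ hi
      refine Nat.findGreatest_is_greatest (P := fun s => r (k + s) k) (k := i - k)
        (show s < _ by omega) (by omega) ?_
      simpa [show k + (i - k) = i by omega] using hi
    · intro hi
      rcases lt_trichotomy i k with h | h | h
      · exact hk i h
      · exact h ▸ f k (by omega)
      · rcases hi.eq_or_lt with rfl | hi
        · exact hs0
        · exact v _ _ _ h hi hs0
  have hsm : s ≤ m := Nat.findGreatest_le m
  refine ⟨k, m, s, fun i j => r i j ∧ i < k ∧ j < k, fun i j => r (i + (k + 1)) (j + (k + 1)),
    rfl, ?_, ?_, ?_, ?_⟩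
  · exact ⟨fun i j h => h.2, fun i hi => ⟨f i (by omega), hi, hi⟩,
      fun i j h h' => a _ _ h.1 h'.1, fun i j l h h' => ⟨t _ _ _ h.1 h'.1, h.2.1, h'.2.2⟩,
      fun a b c hab hbc h => ⟨u _ _ _ hab hbc h.1, by omega, h.2.2⟩,
      fun a b c hab hbc h => ⟨v _ _ _ hab hbc h.1, by omega, h.2.2⟩⟩
  · refine ⟨fun i j h => ?_, fun i hi => f _ (by omega), fun i j h h' => ?_,
      fun i j l h h' => t _ _ _ h h', fun a b c hab hbc h => u _ _ _ (by omega) (by omega) h,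
      fun a b c hab hbc h => v _ _ _ (by omega) (by omega) h⟩
    · have := d _ _ h; omega
    · have := a _ _ h h'; omega
  · rw [Finset.mem_insert, mem_forestRoots]
    rcases hsm.eq_or_lt with h | h
    · exact .inl h
    · refine .inr ⟨h, fun i j hij hj => ?_⟩
      have := (hs (i + (k + 1))).1 (t _ _ _ hij ((hs _).2 (by omega)))
      omega
  · ext i j
    constructor
    · rintro (h | ⟨rfl, h⟩ | ⟨hi, hj, h⟩)
      · exact h.1
      · exact (hs i).2 h
      · simpa [show i - (k + 1) + (k + 1) = i by omega,
          show j - (k + 1) + (k + 1) = j by omega] using h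
    · intro h
      rcases lt_trichotomy j k with hj | rfl | hj
      · exact .inl ⟨h, hhigh i j hj h, hj⟩
      · exact .inr (.inl ⟨rfl, (hs i).1 h⟩)
      · have hi : k < i := by
          by_contra hi
          rcases (not_lt.1 hi).eq_or_lt with rfl | hi
          · exact hmax j hj h
          · have := hlow i j hi h; omega
        refine .inr (.inr ⟨hi, hj, ?_⟩)
        simpa [show i - (k + 1) + (k + 1) = i by omega,
          show j - (k + 1) + (k + 1) = j by omega] using h

/-- Summing over a threshold in `V` (or above it) a power of the number of larger elements. -/
theorem sum_pow_card_filter_le {R : Type*} [CommRing R] (x : R) (V : Finset ℕ) (m : ℕ)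
    (hV : ∀ v ∈ V, v < m) :
    ∑ s ∈ insert m V, x ^ (V.filter (s ≤ ·)).card = ∑ i ∈ Finset.range (V.card + 1), x ^ i := by
  rw [Finset.sum_insert fun h => (hV m h).false, Finset.sum_range_succ', add_comm]
  congr 1
  · clear hV
    induction V using Finset.induction_on_min with
    | empty => simp
    | insert a V ha ih =>
      have haV : a ∉ V := fun h => (ha a h).false
      rw [Finset.sum_insert haV, Finset.card_insert_of_notMem haV, Finset.sum_range_succ, add_comm,
        ← ih]
      congr 1
      · refine Finset.sum_congr rfl fun s hs => ?_
        rw [Finset.filter_insert, if_neg (ha s hs).not_ge]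
      · rw [Finset.filter_true_of_mem, Finset.card_insert_of_notMem haV]
        intro v hv
        rcases Finset.mem_insert.1 hv with rfl | hv
        · exact le_rfl
        · exact (ha v hv).le
  · rw [Finset.filter_false_of_mem fun v hv => (hV v hv).not_ge]
    simp

open Polynomial in
/-- The polynomial counting interval-posets by the number of their forest roots. -/
noncomputable def rootPolynomial (n : ℕ) : ℚ[X] :=
  ∑ r ∈ intervalPosets n, X ^ (forestRoots n r).card

theorem eval_one_rootPolynomial (n : ℕ) :
    (rootPolynomial n).eval 1 = (intervalPosets n).card := by
  simp [rootPolynomial, Polynomial.eval_finsetSum]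

theorem rootPolynomial_zero : rootPolynomial 0 = 1 := by
  have : intervalPosets 0 = {fun _ _ => False} := by
    ext r
    rw [mem_intervalPosets, Finset.mem_singleton]
    constructor
    · intro h
      ext i j
      exact iff_of_false (fun hij => absurd (h.dom i j hij).1 (Nat.not_lt_zero i)) id
    · rintro rfl
      constructor <;> simp
  simp [rootPolynomial, this, forestRoots]

open Polynomial in
theorem rootPolynomial_succ (n : ℕ) :
    rootPolynomial (n + 1) = ∑ p ∈ Finset.HasAntidiagonal.antidiagonal n, X * rootPolynomial p.1 *
      ∑ r ∈ intervalPosets p.2, ∑ i ∈ Finset.range ((forestRoots p.2 r).card + 1), X ^ i := by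
  have hsum : ∀ p : ℕ × ℕ, X * rootPolynomial p.1 * (∑ r ∈ intervalPosets p.2,
      ∑ i ∈ Finset.range ((forestRoots p.2 r).card + 1), (X : ℚ[X]) ^ i) =
      ∑ r₁ ∈ intervalPosets p.1, ∑ r₂ ∈ intervalPosets p.2, ∑ s ∈ insert p.2 (forestRoots p.2 r₂),
        X ^ ((forestRoots p.1 r₁).card + 1 + ((forestRoots p.2 r₂).filter (s ≤ ·)).card) := by
    intro p
    rw [rootPolynomial, Finset.mul_sum (intervalPosets p.1), Finset.sum_mul_sum]
    refine Finset.sum_congr rfl fun r₁ _ => Finset.sum_congr rfl fun r₂ _ => ?_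
    rw [← sum_pow_card_filter_le _ _ p.2 fun v hv => (mem_forestRoots.1 hv).1, Finset.mul_sum]
    exact Finset.sum_congr rfl fun s _ => by ring
  simp_rw [hsum, Finset.sum_sigma']
  symm
  rw [rootPolynomial]
  refine Finset.sum_bij (fun q _ => glue q.1.1 q.2.2.2 q.2.1 q.2.2.1) ?_ ?_ ?_ ?_
  · rintro ⟨⟨k, m⟩, r₁, r₂, s⟩ hq
    simp only [Finset.mem_sigma, Finset.HasAntidiagonal.mem_antidiagonal, mem_intervalPosets] at hq ⊢
    obtain ⟨rfl, h₁, h₂, hs⟩ := hq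
    exact h₁.glue h₂ hs
  · rintro ⟨⟨k, m⟩, r₁, r₂, s⟩ hq ⟨⟨k', m'⟩, r₁', r₂', s'⟩ hq' h
    simp only [Finset.mem_sigma, Finset.HasAntidiagonal.mem_antidiagonal, mem_intervalPosets] at hq hq' h
    obtain ⟨rfl, rfl, rfl, rfl⟩ := glue_injective hq.2.1 hq'.2.1 h
    obtain rfl : m = m' := by omega
    rfl
  · intro r hr
    obtain ⟨k, m, s, r₁, r₂, hkm, h₁, h₂, hs, rfl⟩ := (mem_intervalPosets.1 hr).exists_glue
    refine ⟨⟨⟨k, m⟩, r₁, r₂, s⟩, ?_, rfl⟩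
    simp only [Finset.mem_sigma, Finset.HasAntidiagonal.mem_antidiagonal, mem_intervalPosets]
    exact ⟨hkm, h₁, h₂, hs⟩
  · rintro ⟨⟨k, m⟩, r₁, r₂, s⟩ hq
    simp only [Finset.mem_sigma, Finset.HasAntidiagonal.mem_antidiagonal, mem_intervalPosets] at hq ⊢
    obtain ⟨rfl, h₁, h₂, hs⟩ := hq
    rw [card_forestRoots_glue h₁ h₂ hs]

open Polynomial in
theorem X_sub_one_mul_rootPolynomial_succ (n : ℕ) :
    (X - 1) * rootPolynomial (n + 1) = ∑ p ∈ Finset.HasAntidiagonal.antidiagonal n, X * rootPolynomial p.1 *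
      (X * rootPolynomial p.2 - C ((rootPolynomial p.2).eval 1)) := by
  rw [rootPolynomial_succ, Finset.mul_sum]
  refine Finset.sum_congr rfl fun p _ => ?_
  rw [mul_left_comm]
  congr 1
  rw [eval_one_rootPolynomial, Finset.mul_sum]
  simp_rw [mul_geom_sum]
  simp [rootPolynomial, Finset.mul_sum, pow_succ']

theorem PowerSeries.exists_fixedPoint_of_contracting {R : Type*} [CommRing R]
    (Φ : PowerSeries R → PowerSeries R)
    (hΦ : ∀ k f g, X ^ k ∣ f - g → X ^ (k + 1) ∣ Φ f - Φ g) :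
    ∃ f, Φ f = f := by
  have hstep : ∀ k, (X : PowerSeries R) ^ k ∣ Φ^[k + 1] 0 - Φ^[k] 0 := by
    intro k
    induction k with
    | zero => simp
    | succ k ih =>
      rw [Function.iterate_succ_apply' Φ (k + 1)]
      nth_rw 2 [Function.iterate_succ_apply' Φ k]
      exact hΦ _ _ _ ih
  have hlim : ∀ k j, (X : PowerSeries R) ^ k ∣ Φ^[k + j] 0 - Φ^[k] 0 := by
    intro k j
    induction j with
    | zero => simp
    | succ j ih =>
      have := dvd_add ((pow_dvd_pow X (Nat.le_add_right k j)).trans (hstep (k + j))) ih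
      simpa [add_assoc] using this
  let f : PowerSeries R := mk fun n => coeff n (Φ^[n + 1] 0)
  have hf : ∀ k, (X : PowerSeries R) ^ k ∣ f - Φ^[k] 0 := by
    intro k
    rw [X_pow_dvd_iff]
    intro m hm
    obtain ⟨j, rfl⟩ := Nat.exists_eq_add_of_le (Nat.succ_le_of_lt hm)
    have := X_pow_dvd_iff.1 (hlim (m + 1) j) m (Nat.lt_succ_self m)
    rw [map_sub, sub_eq_zero] at this ⊢
    simp [f, this]
  refine ⟨f, ?_⟩
  ext n
  have h1 := hΦ n _ _ (hf n)
  rw [← Function.iterate_succ_apply' Φ n] at h1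
  have := X_pow_dvd_iff.1 (dvd_sub h1 (hf (n + 1))) n (Nat.lt_succ_self n)
  simpa [sub_eq_zero] using this

/-- The closed form for the number of intervals in the Tamari lattice of size `n`. -/
def tamariNumber (n : ℕ) : ℚ :=
  2 * (4 * n + 1).factorial / ((n + 1).factorial * (3 * n + 2).factorial)

theorem tamariNumber_mul_choose (m n : ℕ) (hnm : n ≤ m + 2) :
    tamariNumber n * ((3 * n + 3).choose (m + 2 - n) : ℚ) =
      6 / (m + 2).factorial * ((m + 2).choose n * (4 * n + 1).descFactorial m) := by
  rcases Nat.lt_or_ge (4 * n + 1) m with h | h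
  · rw [Nat.choose_eq_zero_of_lt (by omega), Nat.descFactorial_eq_zero_iff_lt.2 h]
    simp
  · have h1 := Nat.choose_mul_factorial_mul_factorial (n := 3 * n + 3) (k := m + 2 - n) (by omega)
    have h2 := Nat.choose_mul_factorial_mul_factorial hnm
    have h3 := Nat.factorial_mul_descFactorial h
    rw [show 3 * n + 3 - (m + 2 - n) = 4 * n + 1 - m by omega, Nat.factorial_succ (3 * n + 2)] at h1
    have e1 : ((3 * n + 3).choose (m + 2 - n) : ℚ) =
        (3 * n + 3) * (3 * n + 2).factorial /
          ((m + 2 - n).factorial * (4 * n + 1 - m).factorial) := by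
      rw [eq_div_iff (by positivity)]
      exact_mod_cast (by linarith)
    have e2 : ((m + 2).choose n : ℚ) =
        (m + 2).factorial / (n.factorial * (m + 2 - n).factorial) := by
      rw [eq_div_iff (by positivity)]
      exact_mod_cast (by linarith)
    have e3 : ((4 * n + 1).descFactorial m : ℚ) =
        (4 * n + 1).factorial / (4 * n + 1 - m).factorial := by
      rw [eq_div_iff (by positivity)]
      exact_mod_cast (by linarith)
    rw [e1, e2, e3, tamariNumber, Nat.factorial_succ n]
    push_cast
    field_simp
    ring

theorem sum_neg_one_pow_mul_choose_mul_descFactorial (m : ℕ) :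
    ∑ n ∈ Finset.range (m + 3), (-1 : ℚ) ^ (m + 2 - n) *
      ((m + 2).choose n * (4 * n + 1).descFactorial m) = 0 := by
  let P : Polynomial ℚ := (descPochhammer ℚ m).comp (4 * Polynomial.X + 1)
  have hP : P.natDegree < m + 2 := by
    have h1 : (4 * Polynomial.X + 1 : Polynomial ℚ).natDegree ≤ 1 := by compute_degree
    have h2 := Polynomial.natDegree_comp_le (p := descPochhammer ℚ m)
      (q := 4 * Polynomial.X + 1)
    rw [descPochhammer_natDegree] at h2
    have := Nat.mul_le_mul_left m h1
    show ((descPochhammer ℚ m).comp (4 * Polynomial.X + 1)).natDegree < _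
    omega
  have h := congrFun (Polynomial.fwdDiff_iter_eq_zero_of_degree_lt hP) 0
  rw [fwdDiff_iter_eq_sum_shift] at h
  rw [Pi.zero_apply] at h
  rw [← h]
  refine Finset.sum_congr rfl fun n _ => ?_
  have := descPochhammer_eval_eq_descFactorial ℚ (4 * n + 1) m
  push_cast at this
  simp [P, this, mul_assoc]

theorem PowerSeries.coeff_X_pow_mul_one_sub_X_pow {R : Type*} [CommRing R] (n k m : ℕ)
    (h : n ≤ m) :
    coeff m ((X : PowerSeries R) ^ n * (1 - X) ^ k) = (-1) ^ (m - n) * (k.choose (m - n) : R) := by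
  obtain ⟨j, rfl⟩ := Nat.exists_eq_add_of_le h
  rw [add_comm n j, coeff_X_pow_mul]
  have : ((1 - X) ^ k : PowerSeries R) = (((1 - Polynomial.X) ^ k : Polynomial R) : PowerSeries R) := by
    simp
  rw [this, Polynomial.coeff_coe]
  have h2 : ((1 - Polynomial.X) ^ k : Polynomial R) =
      ((1 + Polynomial.X) ^ k : Polynomial R).comp (Polynomial.C (-1) * Polynomial.X) := by
    simp [sub_eq_add_neg]
  rw [h2, Polynomial.comp_C_mul_X_coeff, Polynomial.coeff_one_add_X_pow]
  simp [mul_comm]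

theorem sum_tamariNumber_mul_coeff (m : ℕ) :
    ∑ n ∈ Finset.range (m + 1), tamariNumber n * PowerSeries.coeff m
        ((PowerSeries.X : PowerSeries ℚ) ^ n * (1 - PowerSeries.X) ^ (3 * n + 3)) =
      PowerSeries.coeff m (1 - 2 * PowerSeries.X : PowerSeries ℚ) := by
  have key : ∀ n ∈ Finset.range (m + 1), tamariNumber n * PowerSeries.coeff m
        ((PowerSeries.X : PowerSeries ℚ) ^ n * (1 - PowerSeries.X) ^ (3 * n + 3)) =
        tamariNumber n * ((-1) ^ (m - n) * ((3 * n + 3).choose (m - n))) := fun n hn => by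
    rw [PowerSeries.coeff_X_pow_mul_one_sub_X_pow _ _ _ (by simpa [Nat.lt_succ_iff] using hn)]
  rw [Finset.sum_congr rfl key]
  have h2X : (2 * PowerSeries.X : PowerSeries ℚ) = PowerSeries.C 2 * PowerSeries.X := by
    rw [map_ofNat]
  rw [h2X]
  match m with
  | 0 => simp [tamariNumber]
  | 1 => norm_num [tamariNumber, Finset.sum_range_succ, Nat.factorial, PowerSeries.coeff_one]
  | m + 2 =>
    have h : ∀ n ∈ Finset.range (m + 3), tamariNumber n *
        ((-1) ^ (m + 2 - n) * ((3 * n + 3).choose (m + 2 - n))) =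
        6 / (m + 2).factorial * ((-1 : ℚ) ^ (m + 2 - n) *
      ((m + 2).choose n * (4 * n + 1).descFactorial m)) := fun n hn => by
      have := tamariNumber_mul_choose m n (by simpa [Nat.lt_succ_iff] using hn)
      linear_combination (-1 : ℚ) ^ (m + 2 - n) * this
    rw [Finset.sum_congr rfl h, ← Finset.mul_sum, sum_neg_one_pow_mul_choose_mul_descFactorial]
    simp [PowerSeries.coeff_one]

theorem PowerSeries.coeff_subst_mul_eq_sum {R : Type*} [CommRing R] (f p q : PowerSeries R)
    (hp : X ∣ p) (m : ℕ) :
    coeff m (f.subst p * q) = ∑ n ∈ Finset.range (m + 1), coeff n f * coeff m (p ^ n * q) := by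
  have hs : HasSubst p := HasSubst.of_constantCoeff_zero' (X_dvd_iff.1 hp)
  have h : ∀ i ≤ m, coeff i (f.subst p) =
      ∑ n ∈ Finset.range (m + 1), coeff n f * coeff i (p ^ n) := by
    intro i hi
    rw [coeff_subst' hs, finsum_eq_sum_of_support_subset]
    · rfl
    · intro n hn
      by_contra hn'
      apply hn
      have : i < n := by simp at hn'; omega
      simp only [X_pow_dvd_iff.1 (pow_dvd_pow_of_dvd hp n) i this, smul_zero]
  simp_rw [coeff_mul, Finset.mul_sum]
  rw [Finset.sum_comm]
  refine Finset.sum_congr rfl fun x hx => ?_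
  rw [h _ (by have := Finset.HasAntidiagonal.mem_antidiagonal.1 hx; omega), Finset.sum_mul]
  exact Finset.sum_congr rfl fun _ _ => mul_assoc _ _ _

/-- Lagrange inversion: the power series `z` with `z (1 - z)³ = X` satisfies
`∑ tamariNumber n Xⁿ = (1 - 2 z) / (1 - z)³`. -/
theorem exists_parametrization_tamariNumber :
    ∃ z : PowerSeries ℚ, PowerSeries.X ∣ z ∧ z * (1 - z) ^ 3 = PowerSeries.X ∧
      PowerSeries.mk tamariNumber * (1 - z) ^ 3 = 1 - 2 * z := by
  let p : PowerSeries ℚ := PowerSeries.X * (1 - PowerSeries.X) ^ 3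
  have hp0 : PowerSeries.constantCoeff p = 0 := by simp [p]
  have hp1 : PowerSeries.coeff 1 p = 1 := by
    simp [p]
  have hu : IsUnit (PowerSeries.coeff 1 p) := by rw [hp1]; exact isUnit_one
  have hpS : PowerSeries.HasSubst p := PowerSeries.HasSubst.of_constantCoeff_zero' hp0
  have hzS := PowerSeries.HasSubst.substInvOfIsUnit p hu
  have hpz := PowerSeries.subst_substInvOfIsUnit_right p hp0 hu
  have hz0 : PowerSeries.constantCoeff (p.substInvOfIsUnit hu) = 0 := by simp
  generalize p.substInvOfIsUnit hu = z at *
  have hsub : ∀ f : PowerSeries ℚ, f.subst z = PowerSeries.substAlgHom hzS f := fun f => by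
    rw [PowerSeries.coe_substAlgHom]
  have hX : PowerSeries.substAlgHom hzS (PowerSeries.X : PowerSeries ℚ) = z := by
    rw [← hsub, PowerSeries.subst_X hzS]
  refine ⟨z, PowerSeries.X_dvd_iff.2 hz0, ?_, ?_⟩
  · rw [← hpz, hsub]
    simp [p, hX]
  · have hA : (PowerSeries.mk tamariNumber).subst p * (1 - PowerSeries.X) ^ 3 =
        (1 - 2 * PowerSeries.X : PowerSeries ℚ) := by
      ext m
      rw [PowerSeries.coeff_subst_mul_eq_sum _ _ _ ⟨_, rfl⟩, ← sum_tamariNumber_mul_coeff]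
      refine Finset.sum_congr rfl fun n _ => ?_
      rw [PowerSeries.coeff_mk]
      congr 2
      rw [mul_pow, ← pow_mul, mul_assoc, ← pow_add]
    have h := congrArg (PowerSeries.substAlgHom hzS) hA
    rw [map_mul, ← hsub, PowerSeries.subst_comp_subst_apply hpS hzS, hpz, PowerSeries.X_subst] at h
    simp only [map_sub, map_mul, map_pow, map_one, map_ofNat, hX] at h
    exact h

open Polynomial in
/-- Evaluation of the catalytic variable at `1`. -/
noncomputable abbrev evalOne : PowerSeries ℚ[X] →+* PowerSeries ℚ :=
  PowerSeries.map (evalRingHom 1)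

open Polynomial in
/-- Coefficientwise embedding of constants. -/
noncomputable abbrev liftC : PowerSeries ℚ →+* PowerSeries ℚ[X] := PowerSeries.map C

open Polynomial in
/-- The catalytic functional equation for Tamari intervals. -/
def CatalyticEq (T : PowerSeries ℚ[X]) : Prop :=
  (PowerSeries.C X - 1) * T = (PowerSeries.C X - 1) +
    PowerSeries.X * (PowerSeries.C X * T * (PowerSeries.C X * T - liftC (evalOne T)))

theorem CatalyticEq.unique {F G : PowerSeries (Polynomial ℚ)} (hF : CatalyticEq F)
    (hG : CatalyticEq G) : F = G := by
  have h : ∀ k, PowerSeries.X ^ k ∣ F - G := by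
    intro k
    induction k with
    | zero => simp
    | succ k ih =>
      have h1 : PowerSeries.X ^ k ∣ liftC (evalOne F) - liftC (evalOne G) := by
        have := map_dvd (liftC.comp evalOne) ih
        simpa using this
      have h2 : PowerSeries.X ^ (k + 1) ∣ (PowerSeries.C Polynomial.X - 1) * (F - G) := by
        obtain ⟨a, ha⟩ := ih
        obtain ⟨b, hb⟩ := h1
        unfold CatalyticEq at hF hG
        refine ⟨PowerSeries.C Polynomial.X * a * (PowerSeries.C Polynomial.X * F -
          liftC (evalOne F)) + PowerSeries.C Polynomial.X * G *
            (PowerSeries.C Polynomial.X * a - b), ?_⟩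
        linear_combination hF - hG + PowerSeries.X * (PowerSeries.C Polynomial.X *
          (PowerSeries.C Polynomial.X * F - liftC (evalOne F)) + PowerSeries.C Polynomial.X *
          PowerSeries.C Polynomial.X * G) * ha - PowerSeries.X * PowerSeries.C Polynomial.X * G * hb
      rw [PowerSeries.X_pow_dvd_iff] at h2 ⊢
      intro m hm
      have h3 := h2 m hm
      rw [← map_one (PowerSeries.C (R := Polynomial ℚ)), ← map_sub, PowerSeries.coeff_C_mul] at h3
      exact (mul_eq_zero.1 h3).resolve_left (Polynomial.X_sub_C_ne_zero 1)
  ext1 n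
  simpa [sub_eq_zero] using PowerSeries.X_pow_dvd_iff.1 (h (n + 1)) n (Nat.lt_succ_self n)

theorem CatalyticEq.evalOne_eq {T : PowerSeries (Polynomial ℚ)} (hT : CatalyticEq T) :
    evalOne T = PowerSeries.mk tamariNumber := by
  obtain ⟨z, ⟨w, hw⟩, hz, ha⟩ := exists_parametrization_tamariNumber
  have hw1 : w * (1 - z) ^ 3 = 1 := by
    apply mul_left_cancel₀ (PowerSeries.X_ne_zero (R := ℚ))
    rw [mul_one, ← mul_assoc, ← hw, hz]
  have ha' : PowerSeries.mk tamariNumber = (1 - 2 * z) * w := by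
    linear_combination w * ha - PowerSeries.mk tamariNumber * hw1
  set x : PowerSeries (Polynomial ℚ) := PowerSeries.C Polynomial.X with hx
  set Z := liftC z with hZ
  have hZ' : Z = PowerSeries.X * liftC w := by simp [hZ, hw]
  have hw1' : liftC w * (1 - Z) ^ 3 = 1 := by simpa using congrArg liftC hw1
  obtain ⟨u, hu⟩ := PowerSeries.exists_fixedPoint_of_contracting
    (fun u => x - 1 + Z * (2 * u * x + Z * u ^ 2 * x)) (by
      rintro k f g ⟨d, hd⟩
      refine ⟨liftC w * (2 * x + Z * x * (f + g)) * d, ?_⟩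
      rw [pow_succ]
      linear_combination Z * (2 * x + Z * x * (f + g)) * hd +
        (2 * x + Z * x * (f + g)) * d * PowerSeries.X ^ k * hZ')
  have hex : evalOne x = 1 := by simp [hx]
  have heZ : ∀ f, evalOne (liftC f) = f := fun f => by ext; simp
  have heu : evalOne u = 0 := by
    have h := congrArg evalOne hu
    simp only [map_add, map_sub, map_mul, map_pow, map_one, map_ofNat, hex, hZ, heZ] at h
    have h2 : evalOne u * (1 - z * (2 + z * evalOne u)) = 0 := by linear_combination -h
    refine (mul_eq_zero.1 h2).resolve_right fun h3 => ?_
    have := congrArg PowerSeries.constantCoeff h3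
    simp [hw] at this
  have hG : CatalyticEq ((1 + Z * u) * (1 - 2 * Z - Z ^ 2 * u) * liftC w) := by
    have he : evalOne ((1 + Z * u) * (1 - 2 * Z - Z ^ 2 * u) * liftC w) = (1 - 2 * z) * w := by
      simp only [map_add, map_sub, map_mul, map_pow, map_one, map_ofNat, hZ, heZ, heu]
      ring
    unfold CatalyticEq
    have hW : (1 + Z * u : PowerSeries (Polynomial ℚ)) ≠ 0 := fun h => by
      have := congrArg PowerSeries.constantCoeff h
      simp [hZ'] at this
    have hxW : x * (1 + Z * u) ^ 2 = 1 + u := by linear_combination hu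
    have htw : PowerSeries.X * liftC w = Z := hZ'.symm
    have hE : liftC ((1 - 2 * z) * w) = (1 - 2 * Z) * liftC w := by
      simp only [map_mul, map_sub, map_one, map_ofNat, hZ]
    rw [he, ← hx, hE]
    apply mul_left_cancel₀ (pow_ne_zero 2 hW)
    generalize liftC w = w' at *
    generalize (PowerSeries.X : PowerSeries (Polynomial ℚ)) = t at *
    set W := 1 + Z * u with hWdef
    set E := 1 - 2 * Z - Z ^ 2 * u with hEdef
    have key : (1 + u - W ^ 2) * W * E = (1 + u - W ^ 2) * (1 - Z) ^ 3 +
        Z * (1 + u) * E * ((1 + u) * E - (1 - 2 * Z) * W) := by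
      rw [hWdef, hEdef]
      ring
    linear_combination (W * E * w' - 1 - t * w' ^ 2 * E *
      ((x * W ^ 2 + 1 + u) * E - (1 - 2 * Z) * W)) * hxW -
      w' * (1 + u) * E * ((1 + u) * E - (1 - 2 * Z) * W) * htw + w' * key +
      (1 + u - W ^ 2) * hw1'
  rw [hT.unique hG]
  simp only [map_add, map_sub, map_mul, map_pow, map_one, map_ofNat, hZ, heZ, heu, ha']
  ring

theorem catalyticEq_mk_rootPolynomial : CatalyticEq (PowerSeries.mk rootPolynomial) := by
  unfold CatalyticEq
  rw [← map_one (PowerSeries.C (R := Polynomial ℚ)), ← map_sub]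
  ext1 n
  cases n with
  | zero => simp [rootPolynomial_zero]
  | succ n =>
    rw [PowerSeries.coeff_C_mul, PowerSeries.coeff_mk,
      X_sub_one_mul_rootPolynomial_succ, map_add, PowerSeries.coeff_succ_X_mul,
      PowerSeries.coeff_mul, PowerSeries.coeff_C, if_neg n.succ_ne_zero, zero_add]
    refine Finset.sum_congr rfl fun p _ => ?_
    simp

theorem card_intervalPosets_eq_tamariNumber (n : ℕ) :
    ((intervalPosets n).card : ℚ) = tamariNumber n := by
  have h := congrArg (PowerSeries.coeff n) catalyticEq_mk_rootPolynomial.evalOne_eq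
  simpa [eval_one_rootPolynomial] using h

/-- The number `N(n)` of Tamari interval-posets of size `n ≥ 1` satisfies
`(n+1)! · (3n+2)! · N(n) = 2 · (4n+1)!`,
i.e. `N(n) = 2·(4n+1)! / ((n+1)!·(3n+2)!)`. -/
theorem tamari_interval_posets_count (n : ℕ) (hn : 1 ≤ n) :
    Nat.factorial (n + 1) * Nat.factorial (3 * n + 2) *
        Nat.card {r : Fin n → Fin n → Prop // IsTamariIntervalPoset n r} =
      2 * Nat.factorial (4 * n + 1) := by
  have h := card_intervalPosets_eq_tamariNumber n
  rw [card_intervalPosets, tamariNumber, eq_div_iff (by positivity), mul_comm] at h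
  exact_mod_cast h
end

section
/- Fix integers m ≥ 1 and n ≥ 1, and let N be the number of partial orders ≺ on {1,…,mn} that are Tamari interval-posets and additionally satisfy j+1 ≺ j for every j with 1 ≤ j ≤ mn−1 such that m does not divide j. Then n·(mn+1)·N = (m+1)·binom((m+1)²·n + m, n−1). -/
section ChainedIntervalPosets

open Finset

/-- `R` is (the graph of) a Tamari interval-poset on the integers `a, …, b - 1` which contains the
relation `j + 1 ≺ j` whenever `m ∤ j + 1`. -/
structure IsChainedIntervalPoset (m a b : ℕ) (R : Finset (ℕ × ℕ)) : Prop where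
  mem_Ico : ∀ i j, (i, j) ∈ R → a ≤ i ∧ i < b ∧ a ≤ j ∧ j < b
  refl : ∀ i, a ≤ i → i < b → (i, i) ∈ R
  antisymm : ∀ i j, (i, j) ∈ R → (j, i) ∈ R → i = j
  trans : ∀ i j l, (i, j) ∈ R → (j, l) ∈ R → (i, l) ∈ R
  up : ∀ i j l, i < j → j < l → (i, l) ∈ R → (j, l) ∈ R
  down : ∀ i j l, i < j → j < l → (l, i) ∈ R → (j, i) ∈ R
  chain : ∀ j, a ≤ j → j + 1 < b → ¬ m ∣ j + 1 → (j + 1, j) ∈ R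

namespace ChainedIntervalPoset

open Classical in
/-- The finite set of chained interval-posets on `a, …, b - 1`. -/
noncomputable def posets (m a b : ℕ) : Finset (Finset (ℕ × ℕ)) :=
  (Ico a b ×ˢ Ico a b).powerset.filter (IsChainedIntervalPoset m a b)

lemma mem_posets {m a b : ℕ} {R : Finset (ℕ × ℕ)} :
    R ∈ posets m a b ↔ IsChainedIntervalPoset m a b R := by
  simp only [posets, mem_filter, mem_powerset, and_iff_right_iff_imp]
  intro h p hp
  have := h.mem_Ico p.1 p.2 hp
  simp only [mem_product, mem_Ico]
  omega

/-- The elements of `a, …, b - 1` that are below no smaller integer. -/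
def roots (a b : ℕ) (R : Finset (ℕ × ℕ)) : Finset ℕ :=
  (Ico a b).filter fun i => ∀ h < i, (i, h) ∉ R

lemma mem_roots {a b i : ℕ} {R : Finset (ℕ × ℕ)} :
    i ∈ roots a b R ↔ (a ≤ i ∧ i < b) ∧ ∀ h < i, (i, h) ∉ R := by
  simp [roots]

/-- The integers `e` for which the elements below a new minimum `a - 1` placed before `R`
can be exactly `a - 1, …, e - 1`. -/
def cuts (m a b : ℕ) (R : Finset (ℕ × ℕ)) : Finset ℕ :=
  (insert b (roots a b R)).filter fun e => m ∣ a ∨ e ≠ a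

lemma mem_cuts {m a b e : ℕ} {R : Finset (ℕ × ℕ)} :
    e ∈ cuts m a b R ↔ (e = b ∨ e ∈ roots a b R) ∧ (m ∣ a ∨ e ≠ a) := by
  simp [cuts]

/-- Glue `R₁` on `a, …, k - 1` and `R₂` on `k + 1, …, b - 1` along `k`, putting
`a, …, e - 1` below `k`. -/
def glue (a k e : ℕ) (R₁ R₂ : Finset (ℕ × ℕ)) : Finset (ℕ × ℕ) :=
  R₁ ∪ R₂ ∪ Ico a e ×ˢ {k}

lemma mem_glue {a k e i j : ℕ} {R₁ R₂ : Finset (ℕ × ℕ)} :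
    (i, j) ∈ glue a k e R₁ R₂ ↔ (i, j) ∈ R₁ ∨ (i, j) ∈ R₂ ∨ (a ≤ i ∧ i < e) ∧ j = k := by
  simp [glue, eq_comm]

lemma le_of_mem_cuts {m k b e : ℕ} {R₂ : Finset (ℕ × ℕ)} (hkb : k < b)
    (he : e ∈ cuts m (k + 1) b R₂) : k < e ∧ e ≤ b := by
  rw [mem_cuts, mem_roots] at he
  omega

lemma lt_of_mem_cuts {m k b e i j : ℕ} {R₂ : Finset (ℕ × ℕ)}
    (h₂ : IsChainedIntervalPoset m (k + 1) b R₂)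
    (he : e ∈ cuts m (k + 1) b R₂) (hij : (i, j) ∈ R₂) (hj : j < e) : i < e := by
  rw [mem_cuts, mem_roots] at he
  have hI := h₂.mem_Ico i j hij
  by_contra hi
  rcases he.1 with h | h
  · omega
  · rcases (not_lt.1 hi).eq_or_lt with h' | h'
    · subst h'; exact h.2 j hj hij
    · exact h.2 j hj (h₂.down j e i hj h' hij)

lemma glue_mem {m a b k e : ℕ} (hak : a ≤ k) (hkb : k < b) (hk : k = a ∨ m ∣ k)
    {R₁ R₂ : Finset (ℕ × ℕ)}
    (h₁ : IsChainedIntervalPoset m a k R₁) (h₂ : IsChainedIntervalPoset m (k + 1) b R₂)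
    (he : e ∈ cuts m (k + 1) b R₂) : IsChainedIntervalPoset m a b (glue a k e R₁ R₂) := by
  have hke := le_of_mem_cuts hkb he
  have hlt := fun i j => lt_of_mem_cuts (i := i) (j := j) h₂ he
  have I₁ := h₁.mem_Ico
  have I₂ := h₂.mem_Ico
  refine ⟨?_, ?_, ?_, ?_, ?_, ?_, ?_⟩
  · intro i j h
    rw [mem_glue] at h
    rcases h with h | h | h
    · have := I₁ _ _ h; omega
    · have := I₂ _ _ h; omega
    · omega
  · intro i hi hib
    rw [mem_glue]
    rcases lt_trichotomy i k with h | h | h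
    · exact .inl (h₁.refl i hi h)
    · right; right; omega
    · exact .inr (.inl (h₂.refl i h hib))
  · intro i j h h'
    rw [mem_glue] at h h'
    have := h₁.antisymm i j
    have := h₂.antisymm i j
    grind
  · intro i j l h h'
    rw [mem_glue] at h h' ⊢
    have := h₁.trans i j l
    have := h₂.trans i j l
    grind
  · intro i j l h h' hh
    rw [mem_glue] at hh ⊢
    have := h₁.up i j l
    have := h₂.up i j l
    grind
  · intro i j l h h' hh
    rw [mem_glue] at hh ⊢
    have := h₁.down i j l
    have := h₂.down i j l
    grind
  · intro j hj hjb hmj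
    rw [mem_glue]
    rcases lt_trichotomy j k with h | h | h
    · have : j + 1 ≠ k := by rintro rfl; grind
      exact .inl (h₁.chain j hj (by omega) hmj)
    · subst h
      rw [mem_cuts] at he
      have : e ≠ j + 1 := by tauto
      right; right; omega
    · exact .inr (.inl (h₂.chain j h hjb hmj))

lemma roots_glue {m a b k e : ℕ} (hak : a ≤ k) (hkb : k < b)
    {R₁ R₂ : Finset (ℕ × ℕ)}
    (h₁ : IsChainedIntervalPoset m a k R₁) (h₂ : IsChainedIntervalPoset m (k + 1) b R₂)
    (he : e ∈ cuts m (k + 1) b R₂) :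
    #(roots a b (glue a k e R₁ R₂)) =
      #(roots a k R₁) + (1 + #((roots (k + 1) b R₂).filter (e ≤ ·))) := by
  have hke := le_of_mem_cuts hkb he
  have I₁ := h₁.mem_Ico
  have I₂ := h₂.mem_Ico
  have key : roots a b (glue a k e R₁ R₂) =
      (roots a k R₁).disjUnion (({k} : Finset ℕ).disjUnion
        ((roots (k + 1) b R₂).filter (e ≤ ·))
        (by rw [disjoint_left]; simp only [mem_singleton, mem_filter, mem_roots]; grind))
      (by rw [disjoint_left]
          simp only [mem_disjUnion, mem_singleton, mem_filter, mem_roots]; grind) := by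
    ext i
    simp only [mem_disjUnion, mem_singleton, mem_filter, mem_roots, mem_glue]
    rcases lt_trichotomy i k with h | h | h
    · grind
    · subst h
      grind
    · constructor
      · rintro ⟨h1, h2⟩
        have := h2 k h
        right; right
        refine ⟨⟨⟨h, h1.2⟩, fun l hl hh => h2 l hl (.inr (.inl hh))⟩, ?_⟩
        by_contra hc
        exact this (.inr (.inr ⟨by omega, rfl⟩))
      · grind
  rw [key, card_disjUnion, card_disjUnion, card_singleton]

lemma glue_injective {m a b k k' e e' : ℕ} (hak : a ≤ k) (hkb : k < b)
    (hak' : a ≤ k') (hkb' : k' < b)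
    {R₁ R₂ R₁' R₂' : Finset (ℕ × ℕ)}
    (h₁ : IsChainedIntervalPoset m a k R₁) (h₂ : IsChainedIntervalPoset m (k + 1) b R₂)
    (he : e ∈ cuts m (k + 1) b R₂)
    (h₁' : IsChainedIntervalPoset m a k' R₁') (h₂' : IsChainedIntervalPoset m (k' + 1) b R₂')
    (he' : e' ∈ cuts m (k' + 1) b R₂') (h : glue a k e R₁ R₂ = glue a k' e' R₁' R₂') :
    k = k' ∧ R₁ = R₁' ∧ R₂ = R₂' ∧ e = e' := by
  have hke := le_of_mem_cuts hkb he
  have hke' := le_of_mem_cuts hkb' he'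
  have I₁ := h₁.mem_Ico
  have I₂ := h₂.mem_Ico
  have I₁' := h₁'.mem_Ico
  have I₂' := h₂'.mem_Ico
  have H : ∀ i j, (i, j) ∈ glue a k e R₁ R₂ ↔ (i, j) ∈ glue a k' e' R₁' R₂' := by simp [h]
  simp only [mem_glue] at H
  have hk : k = k' := by
    have := H a k
    have := H a k'
    grind
  subst hk
  refine ⟨rfl, ?_, ?_, ?_⟩
  · ext ⟨i, j⟩
    have := H i j
    grind
  · ext ⟨i, j⟩
    have := H i j
    grind
  · have := H e k
    have := H e' k
    grind

lemma glue_surjective {m a b : ℕ} (hab : a < b) (hmb : m ∣ b) {R : Finset (ℕ × ℕ)}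
    (hR : IsChainedIntervalPoset m a b R) :
    ∃ k, (a ≤ k ∧ k < b) ∧ (k = a ∨ m ∣ k) ∧ ∃ R₁, IsChainedIntervalPoset m a k R₁ ∧
      ∃ R₂, IsChainedIntervalPoset m (k + 1) b R₂ ∧ ∃ e ∈ cuts m (k + 1) b R₂,
        glue a k e R₁ R₂ = R := by
  have I := hR.mem_Ico
  obtain ⟨k, hk, hmax⟩ : ∃ k, (a, k) ∈ R ∧ ∀ j, (a, j) ∈ R → j ≤ k := by
    have hne : ((Ico a b).filter fun k => (a, k) ∈ R).Nonempty :=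
      ⟨a, by simpa [hab] using hR.refl a le_rfl hab⟩
    refine ⟨_, (mem_filter.1 (max'_mem _ hne)).2, fun j hj => le_max' _ _ ?_⟩
    have := I _ _ hj
    simp only [mem_filter, mem_Ico]
    exact ⟨by omega, hj⟩
  have hkI := I _ _ hk
  have hlow : ∀ i, a ≤ i → i ≤ k → (i, k) ∈ R := by
    intro i hi hik
    rcases hi.eq_or_lt with rfl | hi
    · exact hk
    rcases hik.eq_or_lt with rfl | hik
    · exact hR.refl _ (by omega) (by omega)
    exact hR.up a i k hi hik hk
  have hhigh : ∀ j, k < j → (k, j) ∉ R := by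
    intro j hj h
    have := hmax j (hR.trans a k j hk h)
    omega
  obtain ⟨e, hke, heb, he⟩ : ∃ e, k < e ∧ e ≤ b ∧ ∀ i, k ≤ i → ((i, k) ∈ R ↔ i < e) := by
    have hne : ((Ico k b).filter fun i => (i, k) ∈ R).Nonempty :=
      ⟨k, by simpa [hkI] using hR.refl k (by omega) (by omega)⟩
    set d := max' _ hne with hd
    have hd1 := mem_filter.1 (max'_mem _ hne)
    rw [← hd] at hd1
    have hd2 := mem_Ico.1 hd1.1
    refine ⟨d + 1, by omega, by omega, fun i hi => ⟨fun h => ?_, fun h => ?_⟩⟩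
    · have := I _ _ h
      have : i ≤ d := le_max' _ _ (by simp only [mem_filter, mem_Ico]; exact ⟨by omega, h⟩)
      omega
    · rcases hi.eq_or_lt with rfl | hi
      · exact hR.refl _ (by omega) (by omega)
      rcases (Nat.lt_succ_iff.1 h).eq_or_lt with h | h
      · rw [h]; exact hd1.2
      · exact hR.down k i d hi h hd1.2
  refine ⟨k, by omega, ?_, R.filter (fun p => p.1 < k ∧ p.2 < k), ?_,
    R.filter (fun p => k < p.1 ∧ k < p.2), ?_, e, ?_, ?_⟩
  · by_contra! hc
    have := hR.chain (k - 1) (by omega) (by omega)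
      (by rw [Nat.sub_add_cancel (by omega)]; exact hc.2)
    rw [Nat.sub_add_cancel (by omega)] at this
    have := hR.antisymm _ _ this (hlow (k - 1) (by omega) (by omega))
    omega
  · have := hR.refl
    have := hR.antisymm
    have := hR.trans
    have := hR.up
    have := hR.down
    have := hR.chain
    refine ⟨?_, ?_, ?_, ?_, ?_, ?_, ?_⟩ <;> simp only [mem_filter] <;> grind
  · have := hR.refl
    have := hR.antisymm
    have := hR.trans
    have := hR.up
    have := hR.down
    have := hR.chain
    refine ⟨?_, ?_, ?_, ?_, ?_, ?_, ?_⟩ <;> simp only [mem_filter] <;> grind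
  · rw [mem_cuts]
    constructor
    · by_contra! hc
      simp only [mem_roots, mem_filter] at hc
      have h1 := hc.2
      push Not at h1
      obtain ⟨l, hl, h2, h3⟩ := h1 (by omega)
      have := (he e hke.le).1 (hR.trans e l k h2 ((he l (by omega)).2 hl))
      omega
    · by_contra! hc
      have h1 : k + 1 < b := lt_of_le_of_ne (by omega) (by rintro rfl; exact hc.1 hmb)
      have := (he (k + 1) (by omega)).1 (hR.chain k (by omega) h1 hc.1)
      omega
  · ext ⟨i, j⟩
    rw [mem_glue]
    simp only [mem_filter]
    constructor
    · rintro (h | h | ⟨h, rfl⟩)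
      · exact h.1
      · exact h.1
      · rcases le_total i j with hi | hi
        · exact hlow i h.1 hi
        · exact (he i hi).2 h.2
    · intro h
      have hI := I _ _ h
      rcases lt_trichotomy j k with hj | hj | hj
      · left
        refine ⟨h, ?_, hj⟩
        by_contra hi
        have h1 : (k, j) ∈ R := by
          rcases (not_lt.1 hi).eq_or_lt with rfl | hi
          · exact h
          · exact hR.down j k i hj hi h
        have := hR.antisymm _ _ h1 (hlow j hI.2.2.1 hj.le)
        omega
      · subst hj
        right; right
        refine ⟨⟨hI.1, ?_⟩, rfl⟩
        rcases le_total i j with hi | hi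
        · omega
        · exact (he i hi).1 h
      · right; left
        refine ⟨h, ?_, hj⟩
        by_contra hi
        rcases (not_lt.1 hi).eq_or_lt with rfl | hi
        · exact hhigh j hj h
        · exact hhigh j hj (hR.up i k j hi hj h)

open Polynomial

/-- The polynomial counting chained interval-posets by their number of roots, written in
`X = x - 1` where `x` marks a root. -/
noncomputable def weight (m a b : ℕ) : ℚ[X] :=
  ∑ R ∈ posets m a b, (1 + X) ^ #(roots a b R)

/-- The analogue of `weight` for pairs of a chained interval-poset and one of its cuts; only the
roots after the cut are marked. -/
noncomputable def cutWeight (m a b : ℕ) : ℚ[X] :=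
  ∑ R ∈ posets m a b, ∑ e ∈ cuts m a b R, (1 + X) ^ #((roots a b R).filter (e ≤ ·))

lemma weight_eq_sum {m a b : ℕ} (hab : a < b) (hmb : m ∣ b) :
    weight m a b = ∑ k ∈ (Ico a b).filter (fun k => k = a ∨ m ∣ k),
      weight m a k * ((1 + X) * cutWeight m (k + 1) b) := by
  simp only [weight, cutWeight, mul_sum, sum_mul, ← pow_succ', ← pow_add, sum_sigma']
  symm
  refine sum_bij (fun x _ => glue a x.1 x.2.1.2 x.2.2 x.2.1.1) ?_ ?_ ?_ ?_
  · rintro ⟨k, ⟨R₂, e⟩, R₁⟩ h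
    simp only [mem_sigma, mem_filter, mem_Ico, mem_posets] at h ⊢
    obtain ⟨⟨⟨h1, h2⟩, h3⟩, ⟨h4, h5⟩, h6⟩ := h
    exact glue_mem h1 h2 h3 h6 h4 h5
  · rintro ⟨k, ⟨R₂, e⟩, R₁⟩ h ⟨k', ⟨R₂', e'⟩, R₁'⟩ h' heq
    simp only [mem_sigma, mem_filter, mem_Ico, mem_posets] at h h'
    obtain ⟨⟨⟨h1, h2⟩, -⟩, ⟨h4, h5⟩, h6⟩ := h
    obtain ⟨⟨⟨h1', h2'⟩, -⟩, ⟨h4', h5'⟩, h6'⟩ := h'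
    obtain ⟨rfl, rfl, rfl, rfl⟩ := glue_injective h1 h2 h1' h2' h6 h4 h5 h6' h4' h5' heq
    rfl
  · intro R hR
    rw [mem_posets] at hR
    obtain ⟨k, h1, h2, R₁, h3, R₂, h4, e, h5, rfl⟩ := glue_surjective hab hmb hR
    refine ⟨⟨k, ⟨R₂, e⟩, R₁⟩, ?_, rfl⟩
    simp only [mem_sigma, mem_filter, mem_Ico, mem_posets]
    exact ⟨⟨h1, h2⟩, ⟨h4, h5⟩, h3⟩
  · rintro ⟨k, ⟨R₂, e⟩, R₁⟩ h
    simp only [mem_sigma, mem_filter, mem_Ico, mem_posets] at h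
    obtain ⟨⟨⟨h1, h2⟩, -⟩, ⟨h4, h5⟩, h6⟩ := h
    simp only [roots_glue h1 h2 h6 h4 h5, add_comm 1]

lemma sum_card_filter_le (T : Finset ℕ) :
    X * ∑ e ∈ T, (1 + X : ℚ[X]) ^ #(T.filter (e ≤ ·)) = (1 + X) ^ (#T + 1) - (1 + X) := by
  induction T using Finset.induction_on_min with
  | empty => simp
  | insert i s hi ih =>
    have his : i ∉ s := fun h => (hi i h).false
    rw [sum_insert his, mul_add, filter_true_of_mem, card_insert_of_notMem his]
    · rw [sum_congr rfl (g := fun e => (1 + X : ℚ[X]) ^ #(s.filter (e ≤ ·))), ih]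
      · ring
      · intro e he
        rw [filter_insert, if_neg (hi e he).not_ge]
    · intro j hj
      rcases mem_insert.1 hj with rfl | hj
      · rfl
      · exact (hi j hj).le

lemma coeff_zero_weight (m a b : ℕ) : (weight m a b).coeff 0 = #(posets m a b) := by
  simp [weight, coeff_zero_eq_eval_zero, eval_finsetSum]

lemma X_mul_cutWeight {m a b : ℕ} (hab : a ≤ b) (hmb : m ∣ b) :
    X * cutWeight m a b =
      (if m ∣ a then (1 + X) * weight m a b else weight m a b) - C ((weight m a b).coeff 0) := by
  have key : ∀ R ∈ posets m a b,
      X * ∑ e ∈ cuts m a b R, (1 + X : ℚ[X]) ^ #((roots a b R).filter (e ≤ ·)) =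
        (if m ∣ a then (1 + X) * (1 + X) ^ #(roots a b R) else (1 + X) ^ #(roots a b R)) - 1 := by
    intro R hR
    rw [mem_posets] at hR
    have I := hR.mem_Ico
    have hb : b ∉ roots a b R := by simp [mem_roots]
    have hall : X * ∑ e ∈ insert b (roots a b R),
        (1 + X : ℚ[X]) ^ #((roots a b R).filter (e ≤ ·)) =
          (1 + X) * (1 + X) ^ #(roots a b R) - 1 := by
      rw [sum_insert hb, mul_add, sum_card_filter_le, filter_false_of_mem]
      · simp; ring
      · intro i hi
        rw [mem_roots] at hi
        omega
    by_cases hma : m ∣ a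
    · simp only [cuts, hma, true_or, filter_true, if_true, hall]
    · have ha : a ∈ insert b (roots a b R) := by
        have : a ≠ b := by rintro rfl; exact hma hmb
        rw [mem_insert, mem_roots]
        exact .inr ⟨by omega, fun h hh hm => by have := I _ _ hm; omega⟩
      have haf : (roots a b R).filter (a ≤ ·) = roots a b R := by
        rw [filter_true_of_mem]
        intro i hi
        rw [mem_roots] at hi
        omega
      rw [← add_sum_erase _ _ ha, haf] at hall
      simp only [cuts, hma, false_or, if_false, filter_ne']
      linear_combination hall
  rw [cutWeight, mul_sum, sum_congr rfl key, coeff_zero_weight, sum_sub_distrib]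
  split_ifs <;> simp [weight, mul_sum]

lemma weight_self (m a : ℕ) : weight m a a = 1 := by
  have h : posets m a a = {∅} := by
    ext R
    rw [mem_posets, mem_singleton]
    constructor
    · intro h
      ext ⟨i, j⟩
      have := h.mem_Ico i j
      simp only [notMem_empty, iff_false]
      intro hh
      have := this hh
      omega
    · rintro rfl
      refine ⟨?_, ?_, ?_, ?_, ?_, ?_, ?_⟩ <;> simp; omega
  simp [weight, h, roots]

lemma cutWeight_add {m a b : ℕ} (hab : a ≤ b) (hmb : m ∣ b)
    (h : weight m (a + m) (b + m) = weight m a b) :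
    cutWeight m (a + m) (b + m) = cutWeight m a b := by
  apply mul_left_cancel₀ (X_ne_zero (R := ℚ))
  rw [X_mul_cutWeight hab hmb, X_mul_cutWeight (by omega) (by simpa using hmb), h]
  simp

lemma weight_add {m a b : ℕ} (hab : a ≤ b) (hmb : m ∣ b) :
    weight m (a + m) (b + m) = weight m a b := by
  induction h : b - a using Nat.strong_induction_on generalizing a b with
  | _ n ih =>
  subst h
  rcases hab.eq_or_lt with rfl | hab
  · simp only [weight_self]
  rw [weight_eq_sum hab hmb, weight_eq_sum (by omega) (by simpa using hmb), sum_filter, sum_filter,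
    ← sum_Ico_add']
  refine sum_congr rfl fun k hk => ?_
  rw [mem_Ico] at hk
  have h1 : k + m + 1 = (k + 1) + m := by ring
  have h2 : (k + m = a + m ∨ m ∣ k + m) ↔ (k = a ∨ m ∣ k) := by simp
  rw [h1, if_congr h2 rfl rfl, cutWeight_add (by omega) hmb
    (ih _ (by omega) (by omega) hmb rfl)]
  refine if_ctx_congr Iff.rfl (fun hc => ?_) fun _ => rfl
  congr 1
  rcases hc with rfl | hc
  · rw [weight_self, weight_self]
  · exact ih _ (by omega) hk.1 hc rfl

lemma weight_mul_add {m a b : ℕ} (hab : a ≤ b) (hmb : m ∣ b) (i : ℕ) :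
    weight m (m * i + a) (m * i + b) = weight m a b := by
  induction i with
  | zero => simp
  | succ i ih =>
    rw [← ih, ← weight_add (a := m * i + a) (b := m * i + b) (by omega)
      (dvd_add (dvd_mul_right m i) hmb)]
    congr 1 <;> ring

lemma cutWeight_mul_add {m a b : ℕ} (hab : a ≤ b) (hmb : m ∣ b) (i : ℕ) :
    cutWeight m (m * i + a) (m * i + b) = cutWeight m a b := by
  apply mul_left_cancel₀ (X_ne_zero (R := ℚ))
  rw [X_mul_cutWeight hab hmb, X_mul_cutWeight (by omega) (dvd_add (dvd_mul_right m i) hmb),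
    weight_mul_add hab hmb]
  simp [Nat.dvd_add_right (dvd_mul_right m i)]

end ChainedIntervalPoset

namespace PowerSeries

section FixedPoint

variable {P : Type*} [CommRing P]

lemma eq_of_forall_X_pow_dvd_sub {a b : P⟦X⟧}
    (h : ∀ n, (X : P⟦X⟧) ^ n ∣ a - b) : a = b := by
  ext n
  have := X_pow_dvd_iff.1 (h (n + 1)) n (by omega)
  rwa [map_sub, sub_eq_zero] at this

lemma eq_of_fixed_of_contracting {f : P⟦X⟧ → P⟦X⟧}
    (hf : ∀ n a b, X ^ n ∣ a - b → X ^ (n + 1) ∣ f a - f b) {a b : P⟦X⟧}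
    (ha : f a = a) (hb : f b = b) : a = b := by
  refine eq_of_forall_X_pow_dvd_sub fun n => ?_
  induction n with
  | zero => simp
  | succ n ih => rw [← ha, ← hb]; exact hf n a b ih

lemma exists_fixed_of_contracting {f : P⟦X⟧ → P⟦X⟧}
    (hf : ∀ n a b, X ^ n ∣ a - b → X ^ (n + 1) ∣ f a - f b) : ∃ a, f a = a := by
  have hstep : ∀ n, (X : P⟦X⟧) ^ n ∣ f^[n + 1] 0 - f^[n] 0 := by
    intro n
    induction n with
    | zero => simp
    | succ n ih =>
      have := hf n _ _ ih
      rwa [← Function.iterate_succ_apply' f, ← Function.iterate_succ_apply' f] at this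
  have hle : ∀ n k, (X : P⟦X⟧) ^ n ∣ f^[n + k] 0 - f^[n] 0 := by
    intro n k
    induction k with
    | zero => simp
    | succ k ih =>
      have h := dvd_add ((pow_dvd_pow X (Nat.le_add_right n k)).trans (hstep (n + k))) ih
      rwa [sub_add_sub_cancel] at h
  have happrox : ∀ n, (X : P⟦X⟧) ^ n ∣ mk (fun i => coeff i (f^[i + 1] 0)) - f^[n] 0 := by
    intro n
    rw [X_pow_dvd_iff]
    intro i hi
    have := X_pow_dvd_iff.1 (hle (i + 1) (n - (i + 1))) i (by omega)
    rw [Nat.add_sub_cancel' (by omega), map_sub, sub_eq_zero] at this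
    rw [map_sub, coeff_mk, this, sub_self]
  refine ⟨mk fun i => coeff i (f^[i + 1] 0), eq_of_forall_X_pow_dvd_sub fun n => ?_⟩
  have h1 := hf n _ _ (happrox n)
  rw [← Function.iterate_succ_apply' f] at h1
  have h2 := dvd_sub h1 (happrox (n + 1))
  rw [sub_sub_sub_cancel_right] at h2
  exact (pow_dvd_pow X (Nat.le_succ n)).trans h2

end FixedPoint

/-- The power series `B` with `B = 1 + t B ^ p`. -/
lemma exists_eq_one_add_X_mul_pow (p : ℕ) : ∃ B : ℚ⟦X⟧, B = 1 + X * B ^ p := by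
  obtain ⟨B, hB⟩ := exists_fixed_of_contracting (f := fun B : ℚ⟦X⟧ => 1 + X * B ^ p) (by
    intro n a b h
    rw [add_sub_add_left_eq_sub, ← mul_sub, pow_succ']
    exact mul_dvd_mul_left _ (h.trans (sub_dvd_pow_sub_pow a b p)))
  exact ⟨B, hB.symm⟩

/-- The Rothe–Hagen coefficients of the powers of a generalized binomial series. -/
lemma coeff_pow_of_eq_one_add_X_mul_pow {p : ℕ} (hp : 1 ≤ p) {B : ℚ⟦X⟧}
    (hB : B = 1 + X * B ^ p) (n r : ℕ) :
    (p * n + r : ℚ) * coeff n (B ^ r) = r * (p * n + r).choose n := by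
  induction n generalizing r with
  | zero =>
    have : constantCoeff B = 1 := by rw [hB]; simp
    simp [this]
  | succ n ihn =>
    induction r with
    | zero => simp [coeff_one]
    | succ r ihr =>
      have hrec : B ^ (r + 1) = B ^ r + X * B ^ (r + p) := by
        calc B ^ (r + 1) = B ^ r * B := pow_succ _ _
          _ = B ^ r * (1 + X * B ^ p) := by rw [← hB]
          _ = _ := by ring
      have h1 := ihn (r + p)
      set M := p * n + p + r with hM
      rw [show p * n + (r + p) = M by omega] at h1
      rw [show p * (n + 1) + r = M by rw [hM]; ring] at ihr
      rw [show p * (n + 1) + (r + 1) = M + 1 by rw [hM]; ring, hrec, map_add, coeff_succ_X_mul,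
        Nat.choose_succ_succ]
      have hc : (M.choose (n + 1) : ℚ) * (n + 1) = M.choose n * (M - n) := by
        have hnM : n ≤ M := by nlinarith
        have := Nat.choose_succ_right_eq M n
        rw [← Nat.cast_sub hnM]
        exact_mod_cast this
      have hMq : (M : ℚ) = p * n + p + r := by rw [hM]; push_cast; ring
      have hM0 : (M : ℚ) ≠ 0 := by
        have : 0 < M := by omega
        positivity
      push_cast at h1 ihr ⊢
      apply mul_left_cancel₀ hM0
      rw [hMq] at hc ⊢
      linear_combination (p * n + p + r + 1 : ℚ) * h1 + (p * n + p + r + 1 : ℚ) * ihr - p * hc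

end PowerSeries

namespace ChainedIntervalPoset

open PowerSeries

/-- Evaluation of the polynomial coefficients at `0`. -/
noncomputable def evalZero : (Polynomial ℚ)⟦X⟧ →+* (Polynomial ℚ)⟦X⟧ :=
  PowerSeries.map (Polynomial.C.comp Polynomial.constantCoeff)

/-- Coefficientwise `g ↦ (g - g(0)) / X`. -/
noncomputable def divX (f : (Polynomial ℚ)⟦X⟧) : (Polynomial ℚ)⟦X⟧ :=
  PowerSeries.mk fun n => (PowerSeries.coeff n f).divX

/-- The variable of the polynomial coefficients. -/
noncomputable def svar : (Polynomial ℚ)⟦X⟧ := PowerSeries.C Polynomial.X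

lemma svar_ne_zero : svar ≠ 0 := by
  rw [svar, Ne, map_eq_zero_iff _ PowerSeries.C_injective]
  exact Polynomial.X_ne_zero

lemma svar_mul_divX (f : (Polynomial ℚ)⟦X⟧) : svar * divX f = f - evalZero f := by
  ext1 n
  rw [svar, PowerSeries.coeff_C_mul, divX, PowerSeries.coeff_mk, map_sub, evalZero,
    PowerSeries.coeff_map, eq_sub_iff_add_eq, mul_comm]
  exact Polynomial.divX_mul_X_add _

lemma evalZero_svar : evalZero svar = 0 := by
  simp [evalZero, svar]

lemma evalZero_X : evalZero PowerSeries.X = PowerSeries.X := by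
  simp [evalZero]

lemma divX_mul_of_evalZero_eq {c : (Polynomial ℚ)⟦X⟧} (hc : evalZero c = c)
    (f : (Polynomial ℚ)⟦X⟧) :
    divX (c * f) = c * divX f := by
  apply mul_left_cancel₀ svar_ne_zero
  rw [svar_mul_divX, mul_left_comm, svar_mul_divX, map_mul, hc]
  ring

lemma X_pow_dvd_divX_sub {n : ℕ} {f g : (Polynomial ℚ)⟦X⟧} (h : PowerSeries.X ^ n ∣ f - g) :
    PowerSeries.X ^ n ∣ divX f - divX g := by
  rw [PowerSeries.X_pow_dvd_iff] at h ⊢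
  intro i hi
  have := h i hi
  rw [map_sub, sub_eq_zero] at this ⊢
  rw [divX, divX, coeff_mk, coeff_mk, this]

/-- The divided difference operator `f ↦ L · (f - f(0)) / X`. -/
noncomputable def divDiff (L f : (Polynomial ℚ)⟦X⟧) : (Polynomial ℚ)⟦X⟧ := L * divX f

lemma divDiff_iterate_mul {c : (Polynomial ℚ)⟦X⟧} (hc : evalZero c = c)
    (L f : (Polynomial ℚ)⟦X⟧) (k : ℕ) :
    (divDiff L)^[k] (c * f) = c * (divDiff L)^[k] f := by
  induction k generalizing f with
  | zero => rfl
  | succ k ih =>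
    rw [Function.iterate_succ_apply, Function.iterate_succ_apply, ← ih, divDiff,
      divX_mul_of_evalZero_eq hc, divDiff, mul_left_comm]

lemma divDiff_mul_iterate {c : (Polynomial ℚ)⟦X⟧} (hc : evalZero c = c)
    (L f : (Polynomial ℚ)⟦X⟧) (k : ℕ) :
    (divDiff (c * L))^[k] f = c ^ k * (divDiff L)^[k] f := by
  induction k generalizing f with
  | zero => simp
  | succ k ih =>
    rw [Function.iterate_succ_apply, Function.iterate_succ_apply, ih, divDiff, mul_assoc,
      divDiff_iterate_mul hc, divDiff]
    ring

/-- The functional equation of the generating function has at most one solution. -/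
lemma eq_of_functional_equation {m : ℕ} {G H : (Polynomial ℚ)⟦X⟧}
    (hG : G = (1 + svar) + (1 + svar) * PowerSeries.X * (divDiff G)^[m] G)
    (hH : H = (1 + svar) + (1 + svar) * PowerSeries.X * (divDiff H)^[m] H) : G = H := by
  refine eq_of_fixed_of_contracting
    (f := fun G => (1 + svar) + (1 + svar) * PowerSeries.X * (divDiff G)^[m] G) ?_ hG.symm hH.symm
  intro n a b h
  have key : ∀ k, PowerSeries.X ^ n ∣ (divDiff a)^[k] a - (divDiff b)^[k] b := by
    intro k
    induction k with
    | zero => exact h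
    | succ k ih =>
      rw [Function.iterate_succ_apply', Function.iterate_succ_apply']
      exact dvd_mul_sub_mul h (X_pow_dvd_divX_sub ih)
  rw [add_sub_add_left_eq_sub, ← mul_sub, pow_succ', mul_assoc]
  exact (mul_dvd_mul_left _ (key m)).mul_left _

/-- `v` is a combination of `L * s ^ (k - 1), …, L ^ k` whose coefficients do not involve the
variable `s` of the polynomial coefficients. -/
def IsHomogeneousSum (L : (Polynomial ℚ)⟦X⟧) : ℕ → (Polynomial ℚ)⟦X⟧ → Prop
  | 0, v => v = 0
  | k + 1, v => ∃ d v', evalZero d = d ∧ IsHomogeneousSum L k v' ∧ v = d * L ^ (k + 1) + svar * v'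

namespace IsHomogeneousSum

variable {L : (Polynomial ℚ)⟦X⟧}

lemma zero (k : ℕ) : IsHomogeneousSum L k 0 := by
  induction k with
  | zero => rfl
  | succ k ih => exact ⟨0, 0, by simp, ih, by simp⟩

lemma add {k : ℕ} {v w : (Polynomial ℚ)⟦X⟧}
    (hv : IsHomogeneousSum L k v) (hw : IsHomogeneousSum L k w) :
    IsHomogeneousSum L k (v + w) := by
  induction k generalizing v w with
  | zero =>
    simp only [IsHomogeneousSum] at *
    rw [hv, hw, add_zero]
  | succ k ih =>
    obtain ⟨d, v', hd, hv', rfl⟩ := hv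
    obtain ⟨e, w', he, hw', rfl⟩ := hw
    exact ⟨d + e, v' + w', by rw [map_add, hd, he], ih hv' hw', by ring⟩

lemma const_mul {k : ℕ} {c v : (Polynomial ℚ)⟦X⟧} (hc : evalZero c = c)
    (hv : IsHomogeneousSum L k v) :
    IsHomogeneousSum L k (c * v) := by
  induction k generalizing v with
  | zero =>
    simp only [IsHomogeneousSum] at *
    rw [hv, mul_zero]
  | succ k ih =>
    obtain ⟨d, v', hd, hv', rfl⟩ := hv
    exact ⟨c * d, c * v', by rw [map_mul, hc, hd], ih hv', by ring⟩

lemma svar_mul {k : ℕ} {v : (Polynomial ℚ)⟦X⟧} (hv : IsHomogeneousSum L k v) :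
    IsHomogeneousSum L (k + 1) (svar * v) :=
  ⟨0, v, by simp, hv, by simp⟩

lemma mul {k : ℕ} {v : (Polynomial ℚ)⟦X⟧} (hv : IsHomogeneousSum L k v) :
    IsHomogeneousSum L (k + 1) (L * v) := by
  induction k generalizing v with
  | zero =>
    simp only [IsHomogeneousSum] at hv
    rw [hv, mul_zero]
    exact zero _
  | succ k ih =>
    obtain ⟨d, v', hd, hv', rfl⟩ := hv
    exact ⟨d, L * v', hd, ih hv', by ring⟩

lemma self : IsHomogeneousSum L 1 L :=
  ⟨1, 0, by simp, zero 0, by simp⟩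

lemma self_mul_svar_pow (k : ℕ) : IsHomogeneousSum L (k + 1) (L * svar ^ k) := by
  induction k with
  | zero => simpa using self
  | succ k ih =>
    convert ih.svar_mul using 1
    ring

end IsHomogeneousSum

lemma eq_divDiff_iterate {L : (Polynomial ℚ)⟦X⟧} (hL : evalZero L ≠ 0) {k : ℕ}
    {S T v : (Polynomial ℚ)⟦X⟧}
    (hv : IsHomogeneousSum L k v) (h : svar ^ k * T = L ^ k * S - v) :
    T = (divDiff L)^[k] S := by
  induction k generalizing S v with
  | zero =>
    simp only [IsHomogeneousSum] at hv
    simpa [hv] using h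
  | succ k ih =>
    obtain ⟨d, v', hd, hv', rfl⟩ := hv
    have h0 := congrArg evalZero h
    simp only [map_mul, map_sub, map_add, map_pow, evalZero_svar, hd] at h0
    have hdS : d = evalZero S := by
      apply mul_right_cancel₀ (pow_ne_zero (k + 1) hL)
      linear_combination h0
    rw [Function.iterate_succ_apply]
    refine ih hv' ?_
    apply mul_left_cancel₀ svar_ne_zero
    rw [divDiff]
    linear_combination h - L ^ (k + 1) * svar_mul_divX S - L ^ (k + 1) * hdS

section GeneratingFunctions

/-- The generating function of the chained interval-posets on `n + 1` blocks of length `m`, the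
first of which is truncated to its last `j` elements. -/
noncomputable def blockSeries (m j : ℕ) : (Polynomial ℚ)⟦X⟧ :=
  PowerSeries.mk fun n => weight m (m - j) (m * (n + 1))

/-- The analogue of `blockSeries` for `cutWeight`. -/
noncomputable def cutSeries (m j : ℕ) : (Polynomial ℚ)⟦X⟧ :=
  PowerSeries.mk fun n => cutWeight m (m - j) (m * (n + 1))

lemma weight_block_eq_sum {m j : ℕ} (hj : 1 ≤ j) (hjm : j ≤ m) (n : ℕ) :
    weight m (m - j) (m * (n + 1)) =
      (1 + Polynomial.X) * cutWeight m (m - (j - 1)) (m * (n + 1)) +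
        ∑ p ∈ range n, weight m (m - j) (m * (p + 1)) *
          ((1 + Polynomial.X) * cutWeight m 1 (m * (n - p))) := by
  have hm : m * (n + 1) = m * n + m := by ring
  have hset : (Ico (m - j) (m * (n + 1))).filter (fun k => k = m - j ∨ m ∣ k) =
      insert (m - j) ((range n).image fun p => m * (p + 1)) := by
    ext k
    simp only [mem_filter, mem_Ico, mem_insert, mem_image, mem_range]
    constructor
    · rintro ⟨⟨h1, h2⟩, h | ⟨c, rfl⟩⟩
      · exact .inl h
      · rcases c with _ | c
        · left; omega
        · right
          have := lt_of_mul_lt_mul_left' h2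
          exact ⟨c, by omega, rfl⟩
    · rintro (rfl | ⟨p, hp, rfl⟩)
      · refine ⟨⟨le_rfl, by omega⟩, .inl rfl⟩
      · refine ⟨⟨?_, ?_⟩, .inr (dvd_mul_right _ _)⟩
        · have : m * (p + 1) = m * p + m := by ring
          omega
        · exact Nat.mul_lt_mul_of_pos_left (by omega) (by omega)
  have hnot : m - j ∉ (range n).image fun p => m * (p + 1) := by
    simp only [mem_image, mem_range, not_exists, not_and]
    intro p _ h
    have : m * (p + 1) = m * p + m := by ring
    omega
  rw [weight_eq_sum (by omega) (dvd_mul_right _ _), hset, sum_insert hnot, weight_self, one_mul,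
    show m - j + 1 = m - (j - 1) by omega, sum_image]
  · rw [add_right_inj]
    refine sum_congr rfl fun p hp => ?_
    rw [mem_range] at hp
    have h := cutWeight_mul_add (a := 1) (b := m * (n - p))
      (Nat.mul_pos (by omega) (by omega)) (dvd_mul_right _ _) (p + 1)
    rw [← mul_add, show p + 1 + (n - p) = n + 1 by omega] at h
    rw [h]
  · intro p _ q _ h
    simpa [show m ≠ 0 by omega] using h

lemma blockSeries_eq {m j : ℕ} (hj : 1 ≤ j) (hjm : j ≤ m) :
    blockSeries m j = (1 + svar) * cutSeries m (j - 1) +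
      PowerSeries.X * (blockSeries m j * ((1 + svar) * cutSeries m (m - 1))) := by
  have hs : (1 + svar : (Polynomial ℚ)⟦X⟧) = PowerSeries.C (1 + Polynomial.X) := by
    simp [svar]
  ext1 n
  rw [hs, map_add, PowerSeries.coeff_C_mul]
  simp only [blockSeries, cutSeries, coeff_mk]
  rw [weight_block_eq_sum hj hjm]
  congr 1
  rcases n with _ | n
  · simp
  · rw [PowerSeries.coeff_succ_X_mul, PowerSeries.coeff_mul,
      Finset.Nat.sum_antidiagonal_eq_sum_range_succ_mk]
    refine sum_congr rfl fun p hp => ?_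
    rw [mem_range] at hp
    rw [PowerSeries.coeff_C_mul, coeff_mk, coeff_mk, show n - p + 1 = n + 1 - p by omega,
      show m - (m - 1) = 1 by omega]

lemma blockSeries_zero_eq (m : ℕ) :
    blockSeries m 0 = 1 + PowerSeries.X * blockSeries m m := by
  ext1 n
  rcases n with _ | n
  · simp [blockSeries, weight_self]
  · rw [map_add, PowerSeries.coeff_succ_X_mul]
    simp only [blockSeries, coeff_mk, PowerSeries.coeff_one]
    have := weight_mul_add (m := m) (a := 0) (b := m * (n + 1)) (by omega) (dvd_mul_right _ _) 1
    simp only [mul_one, add_zero] at this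
    simp only [Nat.sub_zero, Nat.sub_self, Nat.succ_ne_zero, if_false, zero_add, ← this]
    congr 1
    ring

lemma svar_mul_cutSeries_zero (m : ℕ) :
    svar * cutSeries m 0 = (1 + svar) * blockSeries m 0 - evalZero (blockSeries m 0) := by
  have hs : (1 + svar : (Polynomial ℚ)⟦X⟧) = PowerSeries.C (1 + Polynomial.X) := by
    simp [svar]
  ext1 n
  rw [hs, svar, map_sub, PowerSeries.coeff_C_mul, PowerSeries.coeff_C_mul]
  simp only [cutSeries, blockSeries, evalZero, coeff_mk, PowerSeries.coeff_map, Nat.sub_zero]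
  rw [X_mul_cutWeight (Nat.le_mul_of_pos_right m n.succ_pos) (dvd_mul_right _ _), if_pos dvd_rfl]
  rfl

lemma svar_mul_cutSeries {m j : ℕ} (hj : 1 ≤ j) (hjm : j < m) :
    svar * cutSeries m j = blockSeries m j - evalZero (blockSeries m j) := by
  ext1 n
  rw [svar, map_sub, PowerSeries.coeff_C_mul]
  simp only [cutSeries, blockSeries, evalZero, coeff_mk, PowerSeries.coeff_map]
  rw [X_mul_cutWeight ((Nat.sub_le m j).trans (Nat.le_mul_of_pos_right m n.succ_pos))
    (dvd_mul_right _ _), if_neg]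
  · rfl
  · intro h
    have := Nat.le_of_dvd (by omega) h
    omega

/-- The functional equation satisfied by the generating function of chained interval-posets. -/
lemma blockSeries_functional_equation {m : ℕ} (hm : 1 ≤ m) {G : (Polynomial ℚ)⟦X⟧}
    (hG : G = (1 + svar) * blockSeries m 0) :
    G = (1 + svar) + (1 + svar) * PowerSeries.X * (divDiff G)^[m] G := by
  have hA : blockSeries m 0 * (1 - PowerSeries.X * ((1 + svar) * cutSeries m (m - 1))) = 1 := by
    linear_combination (1 - PowerSeries.X * ((1 + svar) * cutSeries m (m - 1))) *
      blockSeries_zero_eq m + PowerSeries.X * blockSeries_eq hm le_rfl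
  have hB : ∀ j, 1 ≤ j → j ≤ m → blockSeries m j = G * cutSeries m (j - 1) := by
    intro j hj hjm
    rw [hG]
    linear_combination blockSeries m 0 * blockSeries_eq hj hjm - blockSeries m j * hA
  have hiter : ∀ j, j < m → (divDiff G)^[j + 1] G = blockSeries m (j + 1) := by
    intro j hjm
    rw [hB (j + 1) (by omega) hjm]
    induction j with
    | zero =>
      rw [Function.iterate_one, divDiff]
      congr 1
      apply mul_left_cancel₀ svar_ne_zero
      rw [svar_mul_divX, svar_mul_cutSeries_zero, hG, map_mul, map_add, map_one, evalZero_svar]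
      ring
    | succ j ih =>
      rw [Function.iterate_succ_apply', ih (by omega), divDiff]
      congr 1
      apply mul_left_cancel₀ svar_ne_zero
      rw [svar_mul_divX, ← hB (j + 1) (by omega) (by omega), Nat.add_sub_cancel,
        svar_mul_cutSeries (by omega) hjm]
  obtain ⟨k, rfl⟩ : ∃ k, m = k + 1 := ⟨m - 1, by omega⟩
  rw [hiter k (by omega)]
  linear_combination hG + (1 + svar) * blockSeries_zero_eq (k + 1)

end GeneratingFunctions

section Solution

lemma exists_parametrization (m : ℕ) {z : (Polynomial ℚ)⟦X⟧} (hz : PowerSeries.X ∣ z) :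
    ∃ w W : (Polynomial ℚ)⟦X⟧, w * W = 1 ∧
      w = 1 + (1 + svar) * z * w * ∑ i ∈ range (m + 1), (1 + z * (svar * w)) ^ i := by
  obtain ⟨w, hw⟩ := exists_fixed_of_contracting (f := fun w : (Polynomial ℚ)⟦X⟧ =>
      1 + (1 + svar) * z * w * ∑ i ∈ range (m + 1), (1 + z * (svar * w)) ^ i) (by
    intro n a b h
    have h1 : a - b ∣ (1 + z * (svar * a)) - (1 + z * (svar * b)) :=
      ⟨z * svar, by ring⟩
    have h2 : PowerSeries.X ^ n ∣ a * ∑ i ∈ range (m + 1), (1 + z * (svar * a)) ^ i -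
        b * ∑ i ∈ range (m + 1), (1 + z * (svar * b)) ^ i := by
      refine dvd_mul_sub_mul h ?_
      rw [← sum_sub_distrib]
      exact dvd_sum fun i _ => h.trans (h1.trans (sub_dvd_pow_sub_pow _ _ i))
    rw [add_sub_add_left_eq_sub, mul_assoc _ a, mul_assoc _ b, ← mul_sub, pow_succ']
    exact mul_dvd_mul (hz.mul_left _) h2)
  have hu : IsUnit w := by
    have hz0 : constantCoeff z = 0 := X_dvd_iff.1 hz
    rw [isUnit_iff_constantCoeff, ← hw]
    simp [hz0]
  obtain ⟨W, hW⟩ := hu.exists_right_inv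
  exact ⟨w, W, hW, hw.symm⟩

/-- The homogeneous sums behind the invariance of `1 / u + 1 + z + z * u` under
`u ↦ 1 / (z * u)`. -/
lemma isHomogeneousSum_symmetric {z u w W L : (Polynomial ℚ)⟦X⟧} (hz : evalZero z = z)
    (hu : u = svar * w) (hW : w * W = 1) (hL : L = (1 + u) * (1 + z * u) * W) (k : ℕ) :
    IsHomogeneousSum L (k + 1) (z * (1 + u) * ((1 + u) * W) ^ (k + 1) +
      (1 + z * u) ^ (k + 2) * svar ^ k * W + (1 - z) ^ (k + 2) * svar ^ (k + 1)) := by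
  have hs : svar = u * W := by rw [hu]; linear_combination -svar * hW
  induction k using Nat.twoStepInduction with
  | zero =>
    convert IsHomogeneousSum.self.const_mul (c := 1 + z) (by simp [hz]) using 1
    rw [hs]
    ring
  | one =>
    convert (IsHomogeneousSum.self.mul.const_mul hz).add
      ((IsHomogeneousSum.self_mul_svar_pow 1).const_mul (c := (1 - z) * (1 + z + z))
        (by simp [hz])) using 1
    rw [hs]
    ring
  | more k ih1 ih2 =>
    convert (ih2.mul.add (ih2.svar_mul.const_mul (c := 1 - z) (by simp [hz]))).add
      ((ih1.mul.svar_mul.const_mul (c := -1) (by simp)).add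
        ((IsHomogeneousSum.self_mul_svar_pow (k + 2)).const_mul
          (c := z * (1 - z) ^ (k + 2)) (by simp [hz]))) using 1
    rw [hL, hs]
    ring

/-- The explicit solution of the functional equation. -/
lemma solution_functional_equation {m : ℕ} {B z w W L G : (Polynomial ℚ)⟦X⟧}
    (hBE : evalZero B = B) (hz : z = PowerSeries.X * B ^ (m * (m + 2))) (hB : B = 1 + z * B)
    (hW : w * W = 1)
    (hw : w = 1 + (1 + svar) * z * w * ∑ i ∈ range (m + 1), (1 + z * (svar * w)) ^ i)
    (hL : L = (1 + svar * w) * (1 + z * (svar * w)) * W) (hG : G = B ^ (m + 2) * L) :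
    G = (1 + svar) + (1 + svar) * PowerSeries.X * (divDiff G)^[m] G := by
  have hzE : evalZero z = z := by rw [hz, map_mul, map_pow, hBE, evalZero_X]
  obtain ⟨u, hu⟩ : ∃ u, u = svar * w := ⟨_, rfl⟩
  rw [← hu] at hw hL
  have hx : 1 + u = (1 + svar) * (1 + z * u) ^ (m + 1) := by
    have := mul_geom_sum (1 + z * u) (m + 1)
    linear_combination (1 + svar) * this + hu + svar * hw -
      (1 + svar) * z * (∑ i ∈ range (m + 1), (1 + z * u) ^ i) * hu
  obtain ⟨T, hT⟩ : ∃ T, T = (1 + z * u) ^ (m + 2) * W - (1 - z) ^ (m + 2) := ⟨_, rfl⟩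
  have hxT : (1 + svar) * T = L - (1 + svar) * (1 - z) ^ (m + 2) := by
    rw [hT, hL, hx]
    ring
  have hLE : evalZero L ≠ 0 := by
    have h1 : evalZero w * evalZero W = 1 := by rw [← map_mul, hW, map_one]
    have h2 : evalZero L = evalZero W := by simp [hL, hu, evalZero_svar]
    rw [h2]
    exact right_ne_zero_of_mul_eq_one h1
  have hiter : T = (divDiff L)^[m + 1] (z * (1 + svar)) := by
    refine eq_divDiff_iterate hLE ((isHomogeneousSum_symmetric hzE hu hW hL m).add
      ((IsHomogeneousSum.self_mul_svar_pow m).const_mul (c := -1) (by simp))) ?_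
    have h1 : L ^ (m + 1) * (z * (1 + svar)) = z * (1 + u) * ((1 + u) * W) ^ (m + 1) := by
      rw [hL, mul_pow, mul_pow, mul_pow]
      linear_combination -(1 + u) ^ (m + 1) * z * W ^ (m + 1) * hx
    have h2 : L = (1 + svar) * (1 + z * u) ^ (m + 2) * W := by
      rw [hL, hx]
      ring
    rw [h1, hT]
    linear_combination -svar ^ m * h2
  have hdiv : divDiff L (1 + svar) = L := by
    rw [divDiff]
    have : divX (1 + svar) = 1 := by
      apply mul_left_cancel₀ svar_ne_zero
      rw [svar_mul_divX, map_add, map_one, evalZero_svar]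
      ring
    rw [this, mul_one]
  have hBE' : evalZero (B ^ (m + 2)) = B ^ (m + 2) := by rw [map_pow, hBE]
  rw [divDiff_iterate_mul hzE, Function.iterate_succ_apply, hdiv] at hiter
  have h1 : (divDiff G)^[m] G = (B ^ (m + 2)) ^ (m + 1) * (divDiff L)^[m] L := by
    rw [hG, divDiff_mul_iterate hBE', divDiff_iterate_mul hBE']
    ring
  have h2 : PowerSeries.X * (divDiff G)^[m] G = B ^ (m + 2) * T := by
    rw [h1, hiter, hz]
    ring
  have h3 : B ^ (m + 2) * (1 - z) ^ (m + 2) = 1 := by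
    rw [← mul_pow, show B * (1 - z) = 1 by linear_combination hB, one_pow]
  rw [mul_assoc, h2, mul_left_comm, hxT, hG]
  linear_combination (1 + svar) * h3

end Solution

section Enumeration

lemma evalZero_map_C (f : ℚ⟦X⟧) :
    evalZero (PowerSeries.map Polynomial.C f) = PowerSeries.map Polynomial.C f := by
  ext1 n
  simp [evalZero]

lemma evalZero_blockSeries_zero {m : ℕ} (hm : 1 ≤ m) {B : (Polynomial ℚ)⟦X⟧}
    (hBE : evalZero B = B) (hB : B = 1 + PowerSeries.X * B ^ (m + 1) ^ 2) :
    evalZero (blockSeries m 0) = (m + 1) * B ^ (m + 1) - m * B ^ (m + 2) := by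
  obtain ⟨z, hz⟩ : ∃ z, z = PowerSeries.X * B ^ (m * (m + 2)) := ⟨_, rfl⟩
  have hzE : evalZero z = z := by rw [hz, map_mul, map_pow, hBE, evalZero_X]
  have hzB : B = 1 + z * B := by
    rw [hz, mul_assoc, ← pow_succ, show m * (m + 2) + 1 = (m + 1) ^ 2 by ring]
    exact hB
  obtain ⟨w, W, hW, hw⟩ := exists_parametrization m (hz ▸ dvd_mul_right _ _)
  have hG := eq_of_functional_equation (blockSeries_functional_equation hm rfl)
    (solution_functional_equation hBE hz hzB hW hw rfl rfl)
  have hG0 := congrArg evalZero hG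
  have hw0 := congrArg evalZero hw
  have hW0 := congrArg evalZero hW
  simp only [map_mul, map_add, map_one, map_pow, map_sum, evalZero_svar, hzE, hBE, zero_mul,
    mul_zero, add_zero, one_mul, one_pow, sum_const, card_range, nsmul_eq_mul, mul_one,
    Nat.cast_add, Nat.cast_one] at hG0 hw0 hW0
  rw [hG0]
  linear_combination B ^ (m + 2) * (1 - z * (m + 1)) * hW0 - B ^ (m + 2) * evalZero W * hw0 +
    (m + 1) * B ^ (m + 1) * hzB

lemma card_posets_eq_coeff {m : ℕ} (hm : 1 ≤ m) {B : ℚ⟦X⟧}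
    (hB : B = 1 + PowerSeries.X * B ^ (m + 1) ^ 2) (n : ℕ) :
    (#(posets m 0 (m * n)) : ℚ) =
      (m + 1) * coeff n (B ^ (m + 1)) - m * coeff n (B ^ (m + 2)) := by
  have h := evalZero_blockSeries_zero hm (evalZero_map_C B)
    (by simpa using congrArg (PowerSeries.map Polynomial.C) hB)
  have h1 : ((m + 1) * PowerSeries.map Polynomial.C B ^ (m + 1) -
      m * PowerSeries.map Polynomial.C B ^ (m + 2) : (Polynomial ℚ)⟦X⟧) =
      PowerSeries.map Polynomial.C
        (PowerSeries.C (m + 1 : ℚ) * B ^ (m + 1) - PowerSeries.C (m : ℚ) * B ^ (m + 2)) := by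
    simp
  rw [h1] at h
  have h2 := congrArg (fun f => coeff n f) h
  simp only [evalZero, blockSeries, PowerSeries.coeff_map, coeff_mk, RingHom.comp_apply,
    map_sub (coeff n), PowerSeries.coeff_C_mul, Nat.sub_zero, Polynomial.C_inj] at h2
  have h3 := weight_mul_add (m := m) (Nat.zero_le (m * n)) (dvd_mul_right m n) 1
  rw [← coeff_zero_weight, ← h3, ← h2, mul_one, add_zero, mul_add, mul_one, add_comm]
  rfl

lemma card_posets {m n : ℕ} (hm : 1 ≤ m) (hn : 1 ≤ n) :
    n * (m * n + 1) * #(posets m 0 (m * n)) =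
      (m + 1) * ((m + 1) ^ 2 * n + m).choose (n - 1) := by
  obtain ⟨B, hB⟩ := exists_eq_one_add_X_mul_pow ((m + 1) ^ 2)
  have hp : 1 ≤ (m + 1) ^ 2 := Nat.one_le_pow _ _ m.succ_pos
  have h1 := coeff_pow_of_eq_one_add_X_mul_pow hp hB n (m + 1)
  have h2 := coeff_pow_of_eq_one_add_X_mul_pow hp hB n (m + 2)
  have hN := card_posets_eq_coeff hm hB n
  obtain ⟨M, hM⟩ : ∃ M, M = (m + 1) ^ 2 * n + m := ⟨_, rfl⟩
  have hMq : (M : ℚ) = (m + 1) ^ 2 * n + m := by rw [hM]; push_cast; ring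
  rw [show (m + 1) ^ 2 * n + (m + 1) = M + 1 by omega] at h1
  rw [show (m + 1) ^ 2 * n + (m + 2) = M + 2 by omega] at h2
  rw [← hM]
  have h3 : ((M : ℚ) + 1) * M.choose (n - 1) = (M + 1).choose n * n := by
    have := Nat.add_one_mul_choose_eq M (n - 1)
    rw [Nat.sub_add_cancel hn] at this
    exact_mod_cast this
  have h4 : ((M : ℚ) + 2) * (M + 1).choose n = (M + 2).choose n * (M + 2 - n) := by
    have hnM : n ≤ M + 1 + 1 := by nlinarith
    have := Nat.choose_mul_succ_eq (M + 1) n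
    have hq : ((M + 1).choose n * (M + 1 + 1) : ℚ) =
        (M + 1 + 1).choose n * ((M + 1 + 1 : ℕ) - n : ℚ) := by
      rw [← Nat.cast_sub hnM]
      exact_mod_cast this
    push_cast at hq
    linear_combination hq
  have hM1 : (M + 1 : ℚ) ≠ 0 := by positivity
  have hM2 : (M + 2 : ℚ) ≠ 0 := by positivity
  have hm2 : (m + 2 : ℚ) ≠ 0 := by positivity
  push_cast at h1 h2
  have h5 : n * coeff n (B ^ (m + 1)) = (m + 1) * (M.choose (n - 1) : ℚ) := by
    apply mul_left_cancel₀ hM1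
    rw [hMq] at h3 ⊢
    linear_combination n * h1 - (m + 1) * h3
  have h6 : n * (m * n + 1) * coeff n (B ^ (m + 2)) = (M + 1) * (M.choose (n - 1) : ℚ) := by
    apply mul_left_cancel₀ hm2
    apply mul_left_cancel₀ hM2
    rw [hMq] at h3 h4 ⊢
    linear_combination n * (m * n + 1) * (m + 2) * h2 - (m + 2) * n * h4 -
      (m + 2) * ((m + 1) ^ 2 * n + m + 2) * h3
  have h7 : (n * (m * n + 1) * #(posets m 0 (m * n)) : ℚ) = (m + 1) * M.choose (n - 1) := by
    rw [hN]
    rw [hMq] at h6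
    linear_combination (m + 1) * (m * n + 1) * h5 - m * h6
  exact_mod_cast h7

end Enumeration

open Classical in
/-- Tamari interval-posets with chains on `Fin`, as chained interval-posets. -/
noncomputable def equivPosets (m n : ℕ) :
    {r : Fin (m * n) → Fin (m * n) → Prop //
      IsTamariIntervalPoset (m * n) r ∧
        ∀ j : ℕ, 1 ≤ j → j ≤ m * n - 1 → ¬ m ∣ j →
          ∀ (h1 : j < m * n) (h2 : j - 1 < m * n), r ⟨j, h1⟩ ⟨j - 1, h2⟩} ≃
      posets m 0 (m * n) where
  toFun r := ⟨(Ico 0 (m * n) ×ˢ Ico 0 (m * n)).filter fun p =>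
      ∃ (h1 : p.1 < m * n) (h2 : p.2 < m * n), r.1 ⟨p.1, h1⟩ ⟨p.2, h2⟩, by
    obtain ⟨r, ⟨hr, hup, hdown⟩, hchain⟩ := r
    have hmem : ∀ i j, (i, j) ∈ ((Ico 0 (m * n) ×ˢ Ico 0 (m * n)).filter fun p =>
        ∃ (h1 : p.1 < m * n) (h2 : p.2 < m * n), r ⟨p.1, h1⟩ ⟨p.2, h2⟩) ↔
        ∃ (h1 : i < m * n) (h2 : j < m * n), r ⟨i, h1⟩ ⟨j, h2⟩ := by
      intro i j
      simp only [mem_filter, mem_product, mem_Ico, zero_le, true_and, and_iff_right_iff_imp]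
      rintro ⟨h1, h2, -⟩
      exact ⟨h1, h2⟩
    rw [mem_posets]
    constructor <;> simp only [hmem]
    · rintro i j ⟨h1, h2, -⟩
      exact ⟨i.zero_le, h1, j.zero_le, h2⟩
    · exact fun i _ h => ⟨h, h, hr.refl _⟩
    · rintro i j ⟨h1, h2, h⟩ ⟨_, _, h'⟩
      exact Fin.mk.inj_iff.1 (hr.antisymm _ _ h h')
    · rintro i j l ⟨h1, h2, h⟩ ⟨_, h3, h'⟩
      exact ⟨h1, h3, hr.trans _ _ _ h h'⟩
    · rintro i j l hij hjl ⟨h1, h2, h⟩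
      exact ⟨hjl.trans h2, h2, hup ⟨i, h1⟩ ⟨j, hjl.trans h2⟩ ⟨l, h2⟩ hij hjl h⟩
    · rintro i j l hij hjl ⟨h1, h2, h⟩
      exact ⟨hjl.trans h1, h2, hdown ⟨i, h2⟩ ⟨j, hjl.trans h1⟩ ⟨l, h1⟩ hij hjl h⟩
    · intro j _ hj hm
      exact ⟨hj, by omega, hchain (j + 1) (by omega) (by omega) hm hj (by omega)⟩⟩
  invFun R := ⟨fun i j => ((i : ℕ), (j : ℕ)) ∈ R.1, by
    obtain ⟨R, hR⟩ := R
    rw [mem_posets] at hR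
    refine ⟨⟨{ refl := fun i => hR.refl i i.1.zero_le i.2
               trans := fun i j l => hR.trans i j l
               antisymm := fun i j h h' => Fin.ext (hR.antisymm i j h h') },
      fun i j l => hR.up i j l, fun i j l => hR.down i j l⟩, ?_⟩
    intro j hj _ hm h1 h2
    have := hR.chain (j - 1) (j - 1).zero_le
    rw [Nat.sub_add_cancel hj] at this
    exact this h1 hm⟩
  left_inv r := by
    ext i j
    simp
  right_inv R := by
    obtain ⟨R, hR⟩ := R
    ext ⟨i, j⟩
    have := (mem_posets.1 hR).mem_Ico i j
    simp
    tauto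

end ChainedIntervalPoset

end ChainedIntervalPosets

/-- Enumeration of `m`-Tamari intervals: the number `N` of Tamari interval-posets
`≺` on `{1,…,mn}` satisfying moreover `j+1 ≺ j` for every `1 ≤ j ≤ mn−1` with
`m ∤ j` (element `j` of `{1,…,mn}` is modeled by the index `j-1` in `Fin (m*n)`)
satisfies `n·(mn+1)·N = (m+1)·C((m+1)²·n + m, n−1)`. -/
theorem m_tamari_intervals_count (m n : ℕ) (hm : 1 ≤ m) (hn : 1 ≤ n) :
    n * (m * n + 1) *
        Nat.card {r : Fin (m * n) → Fin (m * n) → Prop //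
          IsTamariIntervalPoset (m * n) r ∧
            ∀ j : ℕ, 1 ≤ j → j ≤ m * n - 1 → ¬ m ∣ j →
              ∀ (h1 : j < m * n) (h2 : j - 1 < m * n), r ⟨j, h1⟩ ⟨j - 1, h2⟩} =
      (m + 1) * Nat.choose ((m + 1) ^ 2 * n + m) (n - 1) := by
  rw [Nat.card_congr (ChainedIntervalPoset.equivPosets m n), Nat.card_eq_fintype_card,
    Fintype.card_coe]
  exact ChainedIntervalPoset.card_posets hm hn
end

section
/- For every n ≥ 1 there exists a bijection φ from the set of area sequences of length n to itself such that for every area sequence a, dinv(φ(a)) = area(a). In particular, the statistics area and dinv are equidistributed on area sequences of length n: for every k, the number of area sequences of length n with area equal to k equals the number of area sequences of length n with dinv equal to k. -/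
/-- An area sequence of length `n`: a sequence `a_1, …, a_n` of natural
numbers (indexed here by `Fin n`, index `i` standing for `a_{i+1}`) with
`a_1 = 0` and `a_{i+1} ≤ a_i + 1`. -/
def IsAreaSeq (n : ℕ) (a : Fin n → ℕ) : Prop :=
  (∀ h : 0 < n, a ⟨0, h⟩ = 0) ∧
    ∀ (i : ℕ) (h : i + 1 < n), a ⟨i + 1, h⟩ ≤ a ⟨i, by omega⟩ + 1

/-- The area of a sequence: `a_1 + a_2 + ⋯ + a_n`. -/
def areaStat (n : ℕ) (a : Fin n → ℕ) : ℕ := ∑ i, a i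

/-- The dinv of a sequence: the number of pairs `(i,j)` with `i < j` and
either `a_j = a_i` or `a_j = a_i − 1`. -/
def dinvStat (n : ℕ) (a : Fin n → ℕ) : ℕ :=
  (Finset.univ.filter fun p : Fin n × Fin n =>
    p.1 < p.2 ∧ (a p.2 = a p.1 ∨ a p.2 + 1 = a p.1)).card

namespace AreaSeq

/-- Area sequences as lists. -/
def Valid (l : List ℕ) : Prop :=
  (∀ x ∈ l.head?, x = 0) ∧ l.IsChain fun x y => y ≤ x + 1

/-- The number of pairs `i < j` with `l_j = l_i` or `l_j = l_i - 1`. -/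
def dinv : List ℕ → ℕ
  | [] => 0
  | x :: l => l.countP (fun y => y = x ∨ y + 1 = x) + dinv l

/-- Splits a nonempty list `u ++ m :: v` at the last occurrence `m` of its maximum. -/
def lastMaxSplit : List ℕ → List ℕ × ℕ × List ℕ
  | [] => ([], 0, [])
  | x :: l =>
    if ∀ y ∈ l, y < x then ([], x, l)
    else (x :: (lastMaxSplit l).1, (lastMaxSplit l).2)

/-- The number of `m` in `u` plus the number of `m - 1` in `v`. -/
def label (u : List ℕ) (m : ℕ) (v : List ℕ) : ℕ :=
  u.countP (· = m) + v.countP (· + 1 = m)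

/-- The labels obtained by removing the last maximum `n` times. For an area sequence of length `n`
this is a reversed area sequence of the same length. -/
def zeta : ℕ → List ℕ → List ℕ
  | 0, _ => []
  | n + 1, l =>
    label (lastMaxSplit l).1 (lastMaxSplit l).2.1 (lastMaxSplit l).2.2 ::
      zeta n ((lastMaxSplit l).1 ++ (lastMaxSplit l).2.2)

/-- `m` is the last occurrence of the maximum of `u ++ m :: v`. -/
def IsLastMax (u : List ℕ) (m : ℕ) (v : List ℕ) : Prop :=
  (∀ x ∈ u, x ≤ m) ∧ ∀ x ∈ v, x < m

theorem lastMaxSplit_spec {l : List ℕ} (hl : l ≠ []) :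
    l = (lastMaxSplit l).1 ++ (lastMaxSplit l).2.1 :: (lastMaxSplit l).2.2 ∧
      IsLastMax (lastMaxSplit l).1 (lastMaxSplit l).2.1 (lastMaxSplit l).2.2 := by
  induction l with
  | nil => exact absurd rfl hl
  | cons x l ih =>
    rw [lastMaxSplit]
    split_ifs with h
    · exact ⟨rfl, by simp, h⟩
    · have hne : l ≠ [] := by rintro rfl; simp at h
      obtain ⟨h1, h2, h3⟩ := ih hne
      refine ⟨congrArg (x :: ·) h1, ?_, h3⟩
      push Not at h
      obtain ⟨y, hy, hxy⟩ := h
      rw [h1, List.mem_append, List.mem_cons] at hy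
      intro z hz
      rcases List.mem_cons.1 hz with rfl | hz
      · rcases hy with hy | rfl | hy
        · exact hxy.trans (h2 y hy)
        · exact hxy
        · exact hxy.trans (h3 y hy).le
      · exact h2 z hz

theorem dinv_append_cons {u : List ℕ} {m : ℕ} {v : List ℕ} (h : IsLastMax u m v) :
    dinv (u ++ m :: v) = dinv (u ++ v) + label u m v := by
  induction u with
  | nil =>
    have : v.countP (fun y => y = m ∨ y + 1 = m) = v.countP (· + 1 = m) :=
      List.countP_congr fun y hy => by have := h.2 y hy; simp; omega
    simp only [List.nil_append, dinv, label, this, List.countP_nil]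
    omega
  | cons x u ih =>
    have ih := ih ⟨fun y hy => h.1 y (by simp [hy]), h.2⟩
    have hx := h.1 x (by simp)
    simp only [label] at ih
    simp only [List.cons_append, dinv, ih, label, List.countP_append, List.countP_cons,
      decide_eq_true_eq]
    split_ifs <;> omega

theorem Valid.eq_nil {m : ℕ} {v : List ℕ} (hl : Valid (m :: v)) (h : IsLastMax [] m v) :
    m = 0 ∧ v = [] := by
  have hm : m = 0 := hl.1 m (by simp)
  refine ⟨hm, List.eq_nil_iff_forall_not_mem.2 fun x hx => ?_⟩
  have := h.2 x hx
  omega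

theorem Valid.le_getLast {u : List ℕ} {m y : ℕ} {v : List ℕ}
    (hl : Valid (u ++ m :: v)) (hy : y ∈ u.getLast?) : m ≤ y + 1 :=
  (List.isChain_append.1 hl.2).2.2 y hy m (by simp)

theorem Valid.remove {u : List ℕ} {m : ℕ} {v : List ℕ}
    (hl : Valid (u ++ m :: v)) (h : IsLastMax u m v) : Valid (u ++ v) := by
  rcases u with _ | ⟨x, u⟩
  · obtain ⟨rfl, rfl⟩ := hl.eq_nil h
    simp [Valid]
  · refine ⟨fun y hy => hl.1 y (by simpa using hy), ?_⟩
    have hc := List.isChain_append.1 hl.2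
    refine List.isChain_append.2 ⟨hc.1, hc.2.1.tail, fun y hy z hz => ?_⟩
    have := hl.le_getLast hy
    have := h.2 z (List.mem_of_mem_head? hz)
    omega

theorem Valid.exists_mem_le_add_one {u : List ℕ} {m : ℕ} {v : List ℕ}
    (hl : Valid (u ++ m :: v)) (hu : u ≠ []) : ∃ y ∈ u, m ≤ y + 1 :=
  ⟨u.getLast hu, List.getLast_mem hu, hl.le_getLast (List.getLast?_eq_some_getLast hu)⟩

theorem label_le {u v u' v' : List ℕ} {m m' : ℕ} (hl : Valid (u ++ m :: v))
    (h : IsLastMax u m v) (h' : IsLastMax u' m' v') (e : u ++ v = u' ++ m' :: v') :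
    label u m v ≤ label u' m' v' + 1 := by
  have hu : u ≠ [] := by
    rintro rfl
    obtain ⟨rfl, rfl⟩ := hl.eq_nil h
    simp at e
  obtain ⟨y, hy, hmy⟩ := hl.exists_mem_le_add_one hu
  have mem (x) : (x ∈ u ∨ x ∈ v) ↔ (x ∈ u' ∨ x = m' ∨ x ∈ v') := by
    rw [← List.mem_append, e]; simp
  have hm' : m' ≤ m := by
    rcases (mem m').2 (by simp) with h1 | h1
    · exact h.1 _ h1
    · exact (h.2 _ h1).le
  have hym : y ≤ m' := by
    rcases (mem y).1 (Or.inl hy) with h1 | rfl | h1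
    · exact h'.1 _ h1
    · rfl
    · exact (h'.2 _ h1).le
  have count (p : ℕ → Bool) := congrArg (List.countP p) e
  simp only [List.countP_append, List.countP_cons] at count
  have h1 : v'.countP (· = m') = 0 := by
    rw [List.countP_eq_zero]
    intro x hx
    have := h'.2 x hx
    simp; omega
  rcases hm'.eq_or_lt with rfl | hlt
  · have key : v.countP (· + 1 = m') ≤ v'.countP (· + 1 = m') := by
      rw [List.append_eq_append_iff] at e
      rcases e with ⟨w, rfl, rfl⟩ | ⟨w, rfl, hw⟩
      · have := h.2 m'; simp at this
      · cases w with
        | nil =>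
          have := h.2 m'
          simp only [List.nil_append] at hw
          rw [← hw] at this
          simp at this
        | cons x w =>
          simp only [List.cons_append, List.cons.injEq] at hw
          rw [hw.2, List.countP_append]
          omega
    have h0 : v.countP (· = m') = 0 := by
      rw [List.countP_eq_zero]
      intro x hx
      have := h.2 x hx
      simp; omega
    have := count (· = m')
    simp only [decide_true, if_true] at this
    simp only [label]
    omega
  · have hmm : m = m' + 1 := by omega
    subst hmm
    have h0 : u.countP (· = m' + 1) = 0 := by
      rw [List.countP_eq_zero]
      intro x hx
      have : x ≤ m' := by
        rcases (mem x).1 (Or.inl hx) with h1 | rfl | h1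
        · exact h'.1 _ h1
        · rfl
        · exact (h'.2 _ h1).le
      simp; omega
    have := count (· = m')
    simp only [decide_true, if_true] at this
    simp only [label, Nat.add_right_cancel_iff]
    omega

theorem label_lt_of_lt {u v u' v' : List ℕ} {m m' : ℕ} (hl' : Valid (u' ++ m' :: v'))
    (h : IsLastMax u m v) (h' : IsLastMax u' m' v') (e : u ++ v = u' ++ v') (hm : m < m') :
    label u' m' v' < label u m v := by
  have hu : u' ≠ [] := by
    rintro rfl
    have := (hl'.eq_nil h').1
    omega
  have hle (x) (hx : x ∈ u' ++ v') : x ≤ m := by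
    rw [← e, List.mem_append] at hx
    rcases hx with h1 | h1
    · exact h.1 _ h1
    · exact (h.2 _ h1).le
  obtain ⟨y, hy, hmy⟩ := hl'.exists_mem_le_add_one hu
  have hym := hle y (by simp [hy])
  obtain rfl : y = m := by omega
  obtain rfl : m' = y + 1 := by omega
  have hpos : 0 < u'.countP (· = y) := List.countP_pos_iff.2 ⟨y, hy, by simp⟩
  have h0 : u'.countP (· = y + 1) = 0 := by
    rw [List.countP_eq_zero]
    intro x hx
    have := hle x (by simp [hx])
    simp; omega
  have h1 : v.countP (· = y) = 0 := by
    rw [List.countP_eq_zero]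
    intro x hx
    have := h.2 x hx
    simp; omega
  have count := congrArg (List.countP (· = y)) e
  simp only [List.countP_append] at count
  simp only [label, Nat.add_right_cancel_iff]
  omega

theorem eq_nil_of_label_eq {u w v : List ℕ} {m : ℕ} (hl : Valid (u ++ w ++ m :: v))
    (h : IsLastMax u m (w ++ v)) (hlab : label u m (w ++ v) = label (u ++ w) m v) :
    w = [] := by
  by_contra hw
  have hmem := List.getLast_mem hw
  have hlt := h.2 (w.getLast hw) (by simp [hmem])
  have hle : m ≤ w.getLast hw + 1 :=
    hl.le_getLast (by simp [List.getLast?_append, List.getLast?_eq_some_getLast hw])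
  have hpos : 0 < w.countP (· + 1 = m) := List.countP_pos_iff.2 ⟨_, hmem, by simp; omega⟩
  have h0 : w.countP (· = m) = 0 := by
    rw [List.countP_eq_zero]
    intro x hx
    have := h.2 x (by simp [hx])
    simp; omega
  simp only [label, List.countP_append] at hlab
  omega

/-- An area sequence is determined by its label and what remains after removing its last
maximum. -/
theorem append_cons_eq_of_label_eq {u v u' v' : List ℕ} {m m' : ℕ} (hl : Valid (u ++ m :: v))
    (hl' : Valid (u' ++ m' :: v')) (h : IsLastMax u m v) (h' : IsLastMax u' m' v')
    (e : u ++ v = u' ++ v') (hlab : label u m v = label u' m' v') :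
    u ++ m :: v = u' ++ m' :: v' := by
  rcases lt_trichotomy m m' with hm | rfl | hm
  · exact absurd hlab (label_lt_of_lt hl' h h' e hm).ne'
  · rcases List.append_eq_append_iff.1 e with ⟨w, rfl, rfl⟩ | ⟨w, rfl, rfl⟩
    · obtain rfl := eq_nil_of_label_eq hl' h hlab
      simp
    · obtain rfl := eq_nil_of_label_eq hl h' hlab.symm
      simp
  · exact absurd hlab (label_lt_of_lt hl h' h e.symm hm).ne

theorem length_zeta (n : ℕ) (l : List ℕ) : (zeta n l).length = n := by
  induction n generalizing l with
  | zero => rfl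
  | succ n ih => simp [zeta, ih]

theorem exists_zeta_succ {n : ℕ} {l : List ℕ} (hl : l.length = n + 1) (hv : Valid l) :
    ∃ u m v, l = u ++ m :: v ∧ IsLastMax u m v ∧ (u ++ v).length = n ∧ Valid (u ++ v) ∧
      zeta (n + 1) l = label u m v :: zeta n (u ++ v) := by
  obtain ⟨h1, h2⟩ := lastMaxSplit_spec (l := l) (by rintro rfl; simp at hl)
  refine ⟨_, _, _, h1, h2, ?_, ?_, rfl⟩
  · rw [h1] at hl
    simp only [List.length_append, List.length_cons] at hl ⊢
    omega
  · rw [h1] at hv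
    exact hv.remove h2

theorem sum_zeta {n : ℕ} {l : List ℕ} (hl : l.length = n) (hv : Valid l) :
    (zeta n l).sum = dinv l := by
  induction n generalizing l with
  | zero => simp [zeta, List.length_eq_zero_iff.1 hl, dinv]
  | succ n ih =>
    obtain ⟨u, m, v, rfl, h, hl', hv', hz⟩ := exists_zeta_succ hl hv
    rw [hz, List.sum_cons, ih hl' hv', dinv_append_cons h, add_comm]

theorem zeta_injective {n : ℕ} {l l' : List ℕ} (hl : l.length = n) (hv : Valid l)
    (hl' : l'.length = n) (hv' : Valid l') (e : zeta n l = zeta n l') : l = l' := by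
  induction n generalizing l l' with
  | zero => rw [List.length_eq_zero_iff.1 hl, List.length_eq_zero_iff.1 hl']
  | succ n ih =>
    obtain ⟨u, m, v, rfl, h, hr, hrv, hz⟩ := exists_zeta_succ hl hv
    obtain ⟨u', m', v', rfl, h', hr', hrv', hz'⟩ := exists_zeta_succ hl' hv'
    rw [hz, hz', List.cons.injEq] at e
    exact append_cons_eq_of_label_eq hv hv' h h' (ih hr hrv hr' hrv' e.2) e.1

theorem valid_reverse_zeta {n : ℕ} {l : List ℕ} (hl : l.length = n) (hv : Valid l) :
    Valid (zeta n l).reverse := by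
  induction n generalizing l with
  | zero => simp [zeta, Valid]
  | succ n ih =>
    obtain ⟨u, m, v, rfl, h, hr, hrv, hz⟩ := exists_zeta_succ hl hv
    have hrec := ih hr hrv
    rw [hz, List.reverse_cons]
    cases n with
    | zero =>
      obtain ⟨rfl, rfl⟩ : u = [] ∧ v = [] := by simpa using List.length_eq_zero_iff.1 hr
      simp [zeta, Valid, label]
    | succ n =>
      obtain ⟨u', m', v', e, h', -, -, hz'⟩ := exists_zeta_succ hr hrv
      have hle := label_le hv h h' e
      rw [hz', List.reverse_cons] at hrec ⊢
      refine ⟨fun x hx => hrec.1 x ?_, List.isChain_append.2 ⟨hrec.2, by simp, ?_⟩⟩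
      · simpa using hx
      · simpa using hle

theorem valid_ofFn {n : ℕ} {a : Fin n → ℕ} : Valid (List.ofFn a) ↔ IsAreaSeq n a := by
  rw [Valid, IsAreaSeq, List.isChain_iff_getElem]
  refine and_congr ?_ ?_
  · cases n <;> simp
  · simp

theorem countP_ofFn {n : ℕ} (a : Fin n → ℕ) (p : ℕ → Prop) [DecidablePred p] :
    (List.ofFn a).countP p = ∑ i, if p (a i) then 1 else 0 := by
  induction n with
  | zero => simp
  | succ n ih =>
    simp only [List.ofFn_succ, List.countP_cons, ih, Fin.sum_univ_succ, decide_eq_true_eq, add_comm]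

theorem dinv_ofFn {n : ℕ} (a : Fin n → ℕ) : dinv (List.ofFn a) = dinvStat n a := by
  induction n with
  | zero => simp [dinv, dinvStat]
  | succ n ih =>
    rw [List.ofFn_succ, dinv, ih, countP_ofFn, dinvStat, dinvStat, Finset.card_filter,
      Finset.card_filter, Fintype.sum_prod_type, Fintype.sum_prod_type]
    simp [Fin.sum_univ_succ, -Finset.sum_boole]

theorem apply_le_index {n : ℕ} {a : Fin n → ℕ} (h : IsAreaSeq n a) (i : ℕ) (hi : i < n) :
    a ⟨i, hi⟩ ≤ i := by
  induction i with
  | zero => exact (h.1 hi).le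
  | succ i ih => exact (h.2 i hi).trans (Nat.succ_le_succ (ih _))

instance (n : ℕ) : Finite {a : Fin n → ℕ // IsAreaSeq n a} :=
  Set.Finite.subset (Set.finite_Iic fun _ : Fin n => n)
    fun _ h i => (apply_le_index h i i.2).trans i.2.le

end AreaSeq

open AreaSeq in
/-- For every `n ≥ 1` there is a bijection `φ` from area sequences of length
`n` to themselves with `dinv (φ a) = area a`; in particular, `area` and `dinv`
are equidistributed on area sequences of length `n`. -/
theorem zeta_map_area_dinv (n : ℕ) (hn : 1 ≤ n) :
    (∃ φ : {a : Fin n → ℕ // IsAreaSeq n a} ≃ {a : Fin n → ℕ // IsAreaSeq n a},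
      ∀ a : {a : Fin n → ℕ // IsAreaSeq n a},
        dinvStat n (φ a).val = areaStat n a.val) ∧
    ∀ k : ℕ,
      Nat.card {a : Fin n → ℕ // IsAreaSeq n a ∧ areaStat n a = k} =
        Nat.card {a : Fin n → ℕ // IsAreaSeq n a ∧ dinvStat n a = k} := by
  have exists_ofFn (b : {a : Fin n → ℕ // IsAreaSeq n a}) :
      ∃ c : {a : Fin n → ℕ // IsAreaSeq n a},
        List.ofFn c.val = (zeta n (List.ofFn b.val)).reverse := by
    have hlen : (zeta n (List.ofFn b.val)).reverse.length = n := by simp [length_zeta]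
    obtain ⟨c, hc⟩ : ∃ c : Fin n → ℕ, List.ofFn c = (zeta n (List.ofFn b.val)).reverse :=
      ⟨fun i => (zeta n (List.ofFn b.val)).reverse[i], List.ext_getElem (by simp [hlen]) (by simp)⟩
    refine ⟨⟨c, valid_ofFn.1 ?_⟩, hc⟩
    rw [hc]
    exact valid_reverse_zeta (by simp) (valid_ofFn.2 b.2)
  choose f hf using exists_ofFn
  have hinj : Function.Injective f := fun b b' e => by
    have := (hf b).symm.trans ((congrArg (fun c => List.ofFn c.val) e).trans (hf b'))
    exact Subtype.ext <| List.ofFn_injective <| zeta_injective (by simp) (valid_ofFn.2 b.2)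
      (by simp) (valid_ofFn.2 b'.2) (List.reverse_injective this)
  have harea (b) : areaStat n (f b).val = dinvStat n b.val := by
    rw [areaStat, ← List.sum_ofFn, hf, List.sum_reverse,
      sum_zeta (by simp) (valid_ofFn.2 b.2), dinv_ofFn]
  let φ := (Equiv.ofBijective f (Finite.injective_iff_bijective.1 hinj)).symm
  have hφ (a) : dinvStat n (φ a).val = areaStat n a.val := by
    rw [← harea]
    exact congrArg (fun c => areaStat n c.val) (φ.symm_apply_apply a)
  refine ⟨⟨φ, hφ⟩, fun k => Nat.card_congr ?_⟩
  exact (Equiv.subtypeSubtypeEquivSubtypeInter _ _).symm.trans <|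
    (φ.subtypeEquiv fun a => by rw [hφ]).trans (Equiv.subtypeSubtypeEquivSubtypeInter _ _)
end
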